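/- arXiv:2211.12861 — 6 statements merged into one kernel-verified Lean document; each statement's English description precedes it below -/
import Mathlib

section
/- Let α > 1 be a real number and define ρ_k = Γ(k+1)/Γ(αk+1) for k = 1, 2, .... Then the sequence (ρ_k)_{k≥1} is strictly decreasing: for every integer k ≥ 1, Γ(k+2)/Γ(α(k+1)+1) < Γ(k+1)/Γ(αk+1). -/
/-!
Passing from `k` to `k + 1` multiplies the numerator `Γ(k+1)` by exactly `k + 1`, and the
denominator `Γ(αk+1)` by more than `αk + 1 ≥ k + 1`: as `α > 1` and `Γ` is strictly increasing on
`[2, ∞)`, we have `Γ(αk+1+α) > Γ(αk+2) = (αk+1) Γ(αk+1)`.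
-/

theorem mul_Gamma_lt_Gamma_add {s h : ℝ} (hs : 1 ≤ s) (hh : 1 < h) :
    s * Real.Gamma s < Real.Gamma (s + h) := by
  rw [← Real.Gamma_add_one (by positivity)]
  have two_le : 2 ≤ s + 1 := by linarith
  have add_one_lt : s + 1 < s + h := by linarith
  exact Real.Gamma_strictMonoOn_Ici two_le (two_le.trans add_one_lt.le) add_one_lt

theorem Gamma_add_one_div_Gamma_add_lt {t s h : ℝ} (ht : 0 < t) (hts : t ≤ s) (hs : 1 ≤ s)
    (hh : 1 < h) :
    Real.Gamma (t + 1) / Real.Gamma (s + h) < Real.Gamma t / Real.Gamma s := by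
  have Gamma_t_pos : 0 < Real.Gamma t := Real.Gamma_pos_of_pos ht
  have Gamma_s_pos : 0 < Real.Gamma s := Real.Gamma_pos_of_pos (by linarith)
  have Gamma_s_add_h_pos : 0 < Real.Gamma (s + h) := Real.Gamma_pos_of_pos (by linarith)
  rw [div_lt_div_iff₀ Gamma_s_add_h_pos Gamma_s_pos]
  calc Real.Gamma (t + 1) * Real.Gamma s
      = Real.Gamma t * (t * Real.Gamma s) := by rw [Real.Gamma_add_one ht.ne']; ring
    _ ≤ Real.Gamma t * (s * Real.Gamma s) := by gcongr
    _ < Real.Gamma t * Real.Gamma (s + h) :=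
        mul_lt_mul_of_pos_left (mul_Gamma_lt_Gamma_add hs hh) Gamma_t_pos

theorem gamma_ratio_strict_anti_general {α x : ℝ} (hα : 1 < α) (hx : 0 ≤ x) :
    Real.Gamma (x + 2) / Real.Gamma (α * (x + 1) + 1) <
      Real.Gamma (x + 1) / Real.Gamma (α * x + 1) := by
  have x_le_mul : x ≤ α * x := le_mul_of_one_le_left hx hα.le
  have ratio_lt := Gamma_add_one_div_Gamma_add_lt (t := x + 1) (s := α * x + 1)
    (by linarith) (by linarith) (by linarith) hα
  rwa [show x + 1 + 1 = x + 2 by ring, show α * x + 1 + α = α * (x + 1) + 1 by ring] at ratio_lt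

/-- For `α > 1`, the sequence `ρ_k = Γ(k+1)/Γ(αk+1)` is strictly decreasing for `k ≥ 1`. -/
theorem gamma_ratio_strict_anti (α : ℝ) (hα : 1 < α) (k : ℕ) (hk : 1 ≤ k) :
    Real.Gamma ((k : ℝ) + 2) / Real.Gamma (α * ((k : ℝ) + 1) + 1) <
      Real.Gamma ((k : ℝ) + 1) / Real.Gamma (α * (k : ℝ) + 1) :=
  gamma_ratio_strict_anti_general hα k.cast_nonneg
end

section
/- Let α > 1 be a real number and define r_k = Γ(k+1)/Γ(αk+α) for k = 1, 2, .... Then the sequence (r_k)_{k≥1} is strictly decreasing: for every integer k ≥ 1, Γ(k+2)/Γ(α(k+1)+α) < Γ(k+1)/Γ(αk+α). -/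
/-!
After clearing denominators and writing `s = k + 1`, the claim is `s * Γ(αs) < Γ(αs + α)`.
Put `y = αs`; multiplying by `α` turns this into `Γ(y + 1) < α * Γ(y + α)`.
Since `Γ` is log-convex, `Γ(y + α) / Γ(y + 1)` is nondecreasing in `y`, so it is at least its
value `Γ(α)` at `y = 0`, and `α * Γ(α) = Γ(α + 1) > Γ(2) = 1`.
-/

open Real Set

section Convex

variable {𝕜 E β : Type*} [Semiring 𝕜] [PartialOrder 𝕜]
  [AddCommGroup E] [Module 𝕜 E]
  [AddCommMonoid β] [PartialOrder β] [IsOrderedAddMonoid β] [Module 𝕜 β]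

theorem convexOn_add_le_add_of_mem_segment {s : Set E} {f : E → β} (hf : ConvexOn 𝕜 s f)
    {a b c d : E} (ha : a ∈ s) (hd : d ∈ s) (hb : b ∈ segment 𝕜 a d) (hsum : b + c = a + d) :
    f b + f c ≤ f a + f d := by
  obtain ⟨u, v, hu, hv, huv, rfl⟩ := hb
  -- `c` is the mirror image of `b`: the same weights, interchanged.
  have hc : c = v • a + u • d := by
    rw [← add_right_inj (u • a + v • d), hsum, add_add_add_comm, ← add_smul, ← add_smul,
      add_comm v u, huv, one_smul, one_smul]
  calc f (u • a + v • d) + f c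
      ≤ (u • f a + v • f d) + (v • f a + u • f d) :=
        add_le_add (hf.2 ha hd hu hv huv) (hc ▸ hf.2 ha hd hv hu (by rwa [add_comm]))
    _ = f a + f d := by
        rw [add_add_add_comm, ← add_smul, ← add_smul, add_comm v u, huv, one_smul, one_smul]

end Convex

theorem gamma_mul_gamma_le_of_mem_Icc {a b c d : ℝ} (ha : 0 < a) (hb : b ∈ Icc a d)
    (hsum : b + c = a + d) : Gamma b * Gamma c ≤ Gamma a * Gamma d := by
  have had : a ≤ d := hb.1.trans hb.2
  have hΓa : 0 < Gamma a := Gamma_pos_of_pos ha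
  have hΓb : 0 < Gamma b := Gamma_pos_of_pos (ha.trans_le hb.1)
  have hΓc : 0 < Gamma c := Gamma_pos_of_pos (by linarith [hb.2])
  have hΓd : 0 < Gamma d := Gamma_pos_of_pos (ha.trans_le had)
  have hlog : log (Gamma b) + log (Gamma c) ≤ log (Gamma a) + log (Gamma d) :=
    convexOn_add_le_add_of_mem_segment convexOn_log_Gamma ha (ha.trans_le had)
      (segment_eq_Icc had ▸ hb) hsum
  rwa [← log_mul hΓb.ne' hΓc.ne', ← log_mul hΓa.ne' hΓd.ne',
    log_le_log_iff (mul_pos hΓb hΓc) (mul_pos hΓa hΓd)] at hlog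

theorem gamma_add_one_lt_mul_gamma_add {α y : ℝ} (hα : 1 < α) (hy : 0 ≤ y) :
    Gamma (y + 1) < α * Gamma (y + α) := by
  have hΓα : 1 < Gamma (α + 1) := by
    have htwo : 2 < α + 1 := by linarith
    simpa only [Gamma_two] using Gamma_strictMonoOn_Ici self_mem_Ici htwo.le htwo
  have hconv : Gamma (y + 1) * Gamma α ≤ Gamma 1 * Gamma (y + α) :=
    gamma_mul_gamma_le_of_mem_Icc one_pos ⟨by linarith, by linarith⟩ (by ring)
  calc Gamma (y + 1)
      < Gamma (y + 1) * Gamma (α + 1) :=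
        lt_mul_of_one_lt_right (Gamma_pos_of_pos (by linarith)) hΓα
    _ = α * (Gamma (y + 1) * Gamma α) := by
        rw [Gamma_add_one (s := α) (by linarith), mul_left_comm]
    _ ≤ α * Gamma (y + α) := by rw [Gamma_one, one_mul] at hconv; gcongr

theorem mul_gamma_mul_lt_gamma_mul_add {α s : ℝ} (hα : 1 < α) (hs : 0 < s) :
    s * Gamma (α * s) < Gamma (α * s + α) := by
  have hα₀ : 0 < α := one_pos.trans hα
  have hαs : 0 < α * s := mul_pos hα₀ hs
  refine lt_of_mul_lt_mul_left ?_ hα₀.le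
  calc α * (s * Gamma (α * s))
      = Gamma (α * s + 1) := by rw [Gamma_add_one hαs.ne', mul_assoc]
    _ < α * Gamma (α * s + α) := gamma_add_one_lt_mul_gamma_add hα hαs.le

theorem gamma_ratio_strict_anti'_general {α x : ℝ} (hα : 1 < α) (hx : -1 < x) :
    Gamma (x + 2) / Gamma (α * (x + 1) + α) < Gamma (x + 1) / Gamma (α * x + α) := by
  have hs : 0 < x + 1 := by linarith
  have hαs : 0 < α * (x + 1) := by positivity
  have hΓs : 0 < Gamma (x + 1) := Gamma_pos_of_pos hs
  have hstep : Gamma (x + 2) = Gamma (x + 1) * (x + 1) := by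
    rw [← one_add_one_eq_two, ← add_assoc, Gamma_add_one hs.ne', mul_comm]
  rw [← mul_add_one α x, hstep,
    div_lt_div_iff₀ (Gamma_pos_of_pos (by linarith)) (Gamma_pos_of_pos hαs), mul_assoc]
  exact mul_lt_mul_of_pos_left (mul_gamma_mul_lt_gamma_mul_add hα hs) hΓs

/-- For `α > 1`, the sequence `r_k = Γ(k+1)/Γ(αk+α)` is strictly decreasing for `k ≥ 1`. -/
theorem gamma_ratio_strict_anti' (α : ℝ) (hα : 1 < α) (k : ℕ) (hk : 1 ≤ k) :
    Real.Gamma ((k : ℝ) + 2) / Real.Gamma (α * ((k : ℝ) + 1) + α) <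
      Real.Gamma ((k : ℝ) + 1) / Real.Gamma (α * (k : ℝ) + α) :=
  gamma_ratio_strict_anti'_general hα (neg_one_lt_zero.trans_le k.cast_nonneg)
end

section
/- Let α > 0, let b ∈ ℝ, and let s > 0 satisfy |b| < s^α. Then the Laplace transform of t ↦ E_α(b t^α) satisfies ∫_0^∞ e^{-st} E_α(b t^α) dt = s^{α-1} / (s^α - b). -/
/-!
Since `∫₀^∞ t ^ (p - 1) e^{-st} dt = Γ(p) / s ^ p`, the Laplace transform cancels the Gamma factors
of the Mittag-Leffler series and leaves the geometric (Neumann) series of the resolvent of `b` at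
`s ^ α`. The condition `‖b‖ < s ^ α` makes that series absolutely convergent, which is also what
allows the series to be integrated term by term.
-/

open MeasureTheory Set

section LaplaceTransform

variable {s : ℝ}

lemma integral_rpow_sub_one_mul_exp_neg_mul_Ioi {p : ℝ} (hp : 0 < p) (hs : 0 < s) :
    ∫ t in Ioi (0 : ℝ), t ^ (p - 1) * Real.exp (-(s * t)) = Real.Gamma p / s ^ p := by
  rw [Real.integral_rpow_mul_exp_neg_mul_Ioi hp hs, one_div, Real.inv_rpow hs.le, inv_mul_eq_div]

lemma integrableOn_rpow_sub_one_mul_exp_neg_mul_Ioi {p : ℝ} (hp : 0 < p) (hs : 0 < s) :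
    IntegrableOn (fun t : ℝ ↦ t ^ (p - 1) * Real.exp (-(s * t))) (Ioi 0) :=
  .of_integral_ne_zero <| by
    rw [integral_rpow_sub_one_mul_exp_neg_mul_Ioi hp hs]
    have := Real.Gamma_pos_of_pos hp
    positivity

theorem hasSum_laplace_tsum_rpow_smul {ι E : Type*} [Countable ι] [NormedAddCommGroup E]
    [NormedSpace ℝ E] [CompleteSpace E] {p : ι → ℝ} {a : ι → E} (hp : ∀ i, 0 < p i) (hs : 0 < s)
    (ha : Summable fun i ↦ ‖(Real.Gamma (p i) / s ^ p i) • a i‖) :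
    HasSum (fun i ↦ (Real.Gamma (p i) / s ^ p i) • a i)
      (∫ t in Ioi (0 : ℝ), Real.exp (-(s * t)) • ∑' i, t ^ (p i - 1) • a i) := by
  have integrable_term (i : ι) :
      IntegrableOn (fun t : ℝ ↦ (t ^ (p i - 1) * Real.exp (-(s * t))) • a i) (Ioi 0) :=
    (integrableOn_rpow_sub_one_mul_exp_neg_mul_Ioi (hp i) hs).smul_const (a i)
  have integral_norm_term (i : ι) :
      ∫ t in Ioi (0 : ℝ), ‖(t ^ (p i - 1) * Real.exp (-(s * t))) • a i‖ =
        ‖(Real.Gamma (p i) / s ^ p i) • a i‖ := by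
    have hΓ := Real.Gamma_pos_of_pos (hp i)
    rw [norm_smul, Real.norm_of_nonneg (by positivity),
      ← integral_rpow_sub_one_mul_exp_neg_mul_Ioi (hp i) hs, ← integral_mul_const]
    refine setIntegral_congr_fun measurableSet_Ioi fun t (ht : 0 < t) ↦ ?_
    rw [norm_smul, Real.norm_of_nonneg (by positivity)]
  have hasSum_integral_term := hasSum_integral_of_summable_integral_norm integrable_term
    (by simpa only [integral_norm_term] using ha)
  simp only [integral_smul_const, integral_rpow_sub_one_mul_exp_neg_mul_Ioi (hp _) hs]
    at hasSum_integral_term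
  simpa only [mul_comm _ (Real.exp _), mul_smul, tsum_const_smul'']
    using hasSum_integral_term

end LaplaceTransform

lemma norm_inv_smul_lt_one {𝕜 E : Type*} [NormedField 𝕜] [SeminormedAddCommGroup E]
    [NormedSpace 𝕜 E] {r : 𝕜} {x : E} (h : ‖x‖ < ‖r‖) : ‖r⁻¹ • x‖ < 1 := by
  rwa [norm_smul, norm_inv, inv_mul_lt_one₀ ((norm_nonneg x).trans_lt h)]

theorem tsum_inv_smul_pow_eq_smul_resolvent {𝕜 A : Type*} [NormedField 𝕜] [NormedRing A]
    [NormedAlgebra 𝕜 A] [HasSummableGeomSeries A] {b : A} {r : 𝕜} (hb : ‖b‖ < ‖r‖) :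
    ∑' k : ℕ, (r⁻¹ • b) ^ k = r • resolvent b r := by
  have hr : r ≠ 0 := norm_pos_iff.mp ((norm_nonneg b).trans_lt hb)
  calc ∑' k : ℕ, (r⁻¹ • b) ^ k
      = resolvent (r⁻¹ • b) (1 : 𝕜) := by
        rw [resolvent, map_one, NormedRing.inverse_one_sub _ (norm_inv_smul_lt_one hb)]; rfl
    _ = r • resolvent b r := (spectrum.units_smul_resolvent_self (r := Units.mk0 r hr)).symm

/-- The two-parameter Mittag-Leffler function `E_{α,β}(z) = ∑ₖ zᵏ / Γ(αk + β)`, with `z` in a real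
topological algebra (for instance a bounded operator). The one-parameter function `E_α` is
`E_{α,1}`. Where the series diverges, the value is `0`. -/
noncomputable def mittagLeffler {A : Type*} [Ring A] [Algebra ℝ A] [TopologicalSpace A]
    (α β : ℝ) (z : A) : A :=
  ∑' k : ℕ, (Real.Gamma (α * k + β))⁻¹ • z ^ k

lemma mittagLeffler_eq_tsum_div (α β z : ℝ) :
    mittagLeffler α β z = ∑' k : ℕ, z ^ k / Real.Gamma (α * k + β) := by
  simp only [mittagLeffler, smul_eq_mul, inv_mul_eq_div]

lemma rpow_smul_mittagLeffler {A : Type*} [Ring A] [Algebra ℝ A] [TopologicalSpace A] [T2Space A]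
    [ContinuousConstSMul ℝ A] (α β : ℝ) (b : A) {t : ℝ} (ht : 0 < t) :
    t ^ (β - 1) • mittagLeffler α β (t ^ α • b) =
      ∑' k : ℕ, t ^ (α * k + β - 1) • (Real.Gamma (α * k + β))⁻¹ • b ^ k := by
  rw [mittagLeffler, ← tsum_const_smul'']
  refine tsum_congr fun k ↦ ?_
  rw [smul_pow, add_sub_assoc, Real.rpow_add ht, Real.rpow_mul_natCast ht.le]
  module

theorem laplace_mittagLeffler_general {A : Type*} [NormedRing A] [NormedAlgebra ℝ A]
    [CompleteSpace A] {α β s : ℝ} {b : A} (hα : 0 ≤ α) (hβ : 0 < β) (hs : 0 < s)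
    (hb : ‖b‖ < s ^ α) :
    ∫ t in Ioi (0 : ℝ),
        Real.exp (-(s * t)) • t ^ (β - 1) • mittagLeffler α β (t ^ α • b) =
      s ^ (α - β) • resolvent b (s ^ α) := by
  have hp (k : ℕ) : 0 < α * k + β := by positivity
  have hsα : 0 < s ^ α := by positivity
  have hb' : ‖b‖ < ‖s ^ α‖ := by rwa [Real.norm_of_nonneg hsα.le]
  have laplace_term (k : ℕ) :
      (Real.Gamma (α * k + β) / s ^ (α * k + β)) • (Real.Gamma (α * k + β))⁻¹ • b ^ k =
        s ^ (-β) • ((s ^ α)⁻¹ • b) ^ k := by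
    have hΓ := (Real.Gamma_pos_of_pos (hp k)).ne'
    rw [smul_pow, inv_pow, smul_smul, smul_smul, Real.rpow_add hs, Real.rpow_mul_natCast hs.le,
      Real.rpow_neg hs.le]
    congr 1
    field_simp
  have summable_norm : Summable fun k : ℕ ↦
      ‖(Real.Gamma (α * k + β) / s ^ (α * k + β)) • (Real.Gamma (α * k + β))⁻¹ • b ^ k‖ := by
    simpa only [laplace_term, norm_smul (s ^ (-β))] using
      (summable_norm_geometric_of_norm_lt_one (norm_inv_smul_lt_one hb')).mul_left ‖s ^ (-β)‖
  calc _ = ∫ t in Ioi (0 : ℝ), Real.exp (-(s * t)) •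
        ∑' k : ℕ, t ^ (α * k + β - 1) • (Real.Gamma (α * k + β))⁻¹ • b ^ k :=
        setIntegral_congr_fun measurableSet_Ioi fun t ht ↦ by
          simp only [rpow_smul_mittagLeffler α β b ht]
    _ = ∑' k : ℕ, s ^ (-β) • ((s ^ α)⁻¹ • b) ^ k := by
        simp only [← (hasSum_laplace_tsum_rpow_smul hp hs summable_norm).tsum_eq, laplace_term]
    _ = s ^ (α - β) • resolvent b (s ^ α) := by
        rw [tsum_const_smul'', tsum_inv_smul_pow_eq_smul_resolvent hb', smul_smul,
          ← Real.rpow_add hs, neg_add_eq_sub]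

/-- Laplace transform of the one-parameter Mittag-Leffler function:
for `α > 0`, `b ∈ ℝ`, `s > 0` with `|b| < s^α`,
`∫_0^∞ e^{-st} E_α(b t^α) dt = s^{α-1}/(s^α - b)`. -/
theorem laplace_mittagLeffler (α b s : ℝ) (hα : 0 < α) (hs : 0 < s) (hb : |b| < s ^ α) :
    ∫ t in Set.Ioi (0 : ℝ),
        Real.exp (-(s * t)) * ∑' k : ℕ, (b * t ^ α) ^ k / Real.Gamma (α * k + 1) =
      s ^ (α - 1) / (s ^ α - b) := by
  simpa [mittagLeffler_eq_tsum_div, resolvent, div_eq_mul_inv, mul_comm b] using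
    laplace_mittagLeffler_general (b := b) hα.le one_pos hs hb
end

section
/- Let 0 < α ≤ 1 and β ≥ α be real numbers. Then the function h(x) = E_{α,β}(−x) is smooth on (0,∞) and completely monotone: for every integer n ≥ 0 and every x > 0, (−1)^n h^{(n)}(x) ≥ 0, where h^{(n)} denotes the n-th derivative. -/
/-!
The derivatives of `E_{α,β}` are positive multiples of Prabhakar functions `E^n_{α,γ}` with
`α n ≤ γ`, so it suffices that these are nonnegative on `(-∞, 0]`. Replacing each `1 / Γ(α k + γ)`
by its approximant from Euler's limit formula turns `E^n_{α,γ}(z)` into a positive multiple of the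
coefficient of `X ^ (N + 1)` in `(1 - X) ^ (-γ) * (1 - t * (1 - X) ^ (-α)) ^ (-n)`, where
`t = z * N ^ (-α)`. This power series can be written as
`(1 - X) ^ (-(γ - α * n)) * ((1 - X) ^ α - t) ^ (-n)`. For `0 < α ≤ 1` all coefficients of
`(1 - X) ^ α` but the constant one are nonpositive, so for `-1 < t ≤ 0` the inverse of
`(1 - X) ^ α - t` has nonnegative coefficients, and nonnegativity passes to the limit `N → ∞`.
-/

open Filter Topology Asymptotics PowerSeries
open scoped Nat PowerSeries.WithPiTopology

section Multichoose

variable {R : Type*} [CommRing R] [BinomialRing R]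

lemma factorial_mul_multichoose (s : R) (n : ℕ) :
    (n ! : R) * Ring.multichoose s n = ∏ j ∈ Finset.range n, (s + j) := by
  rw [← nsmul_eq_mul, Ring.factorial_nsmul_multichoose_eq_ascPochhammer,
    Polynomial.ascPochhammer_smeval_eq_eval]
  induction n with
  | zero => simp
  | succ n ih => rw [ascPochhammer_succ_eval, ih, Finset.prod_range_succ]

variable [LinearOrder R] [IsStrictOrderedRing R]

lemma multichoose_nonneg {s : R} (hs : 0 ≤ s) (n : ℕ) : 0 ≤ Ring.multichoose s n := by
  refine nonneg_of_mul_nonneg_right ?_ (Nat.cast_pos.2 n.factorial_pos)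
  rw [factorial_mul_multichoose]
  positivity

lemma multichoose_succ_nonpos {s : R} (hs : -1 ≤ s) (hs' : s ≤ 0) (n : ℕ) :
    Ring.multichoose s (n + 1) ≤ 0 := by
  refine nonpos_of_mul_nonpos_right ?_ (Nat.cast_pos.2 (n + 1).factorial_pos)
  rw [factorial_mul_multichoose, Finset.prod_range_succ', Nat.cast_zero, add_zero]
  refine mul_nonpos_of_nonneg_of_nonpos (Finset.prod_nonneg fun j _ => ?_) hs'
  rw [Nat.cast_succ]
  linarith [j.cast_nonneg (α := R)]

end Multichoose

lemma coeff_nonneg_of_coeff_mul_nonneg {R : Type*} [Ring R] [LinearOrder R] [IsStrictOrderedRing R]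
    {f g : R⟦X⟧} (hf₀ : 0 < coeff 0 f) (hf : ∀ n, coeff (n + 1) f ≤ 0)
    (hfg : ∀ n, 0 ≤ coeff n (f * g)) (n : ℕ) : 0 ≤ coeff n g := by
  induction n using Nat.strong_induction_on with
  | _ n ih =>
    have hn := hfg n
    rw [coeff_mul] at hn
    cases n with
    | zero => exact nonneg_of_mul_nonneg_right (by simpa using hn) hf₀
    | succ n =>
      rw [Finset.Nat.antidiagonal_succ, Finset.sum_cons, Finset.sum_map] at hn
      have htail : ∑ p ∈ Finset.HasAntidiagonal.antidiagonal n,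
          coeff (p.1 + 1) f * coeff p.2 g ≤ 0 :=
        Finset.sum_nonpos fun p hp => mul_nonpos_of_nonpos_of_nonneg (hf _)
          (ih _ (Finset.Nat.antidiagonal.snd_lt hp))
      exact nonneg_of_mul_nonneg_right (hn.trans (add_le_of_nonpos_right htail)) hf₀

section NegBinomial

variable {R : Type*} [CommRing R] [BinomialRing R]

/-- The formal power series `(1 - X) ^ (-s)`. -/
noncomputable def negBinomialSeries (s : R) : R⟦X⟧ :=
  rescale (-1) (binomialSeries R (-s))

lemma coeff_negBinomialSeries (s : R) (n : ℕ) :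
    coeff n (negBinomialSeries s) = Ring.multichoose s n := by
  rw [negBinomialSeries, coeff_rescale, binomialSeries_coeff, Ring.choose_neg', Units.smul_def]
  simp [Int.negOnePow_def, ← mul_assoc, ← mul_pow]

lemma negBinomialSeries_add (s t : R) :
    negBinomialSeries (s + t) = negBinomialSeries s * negBinomialSeries t := by
  simp only [negBinomialSeries, neg_add, binomialSeries_add, map_mul]

end NegBinomial

lemma natMultichoose_le_pow (n k : ℕ) : n.multichoose k ≤ (k + 1) ^ n := by
  induction n generalizing k with
  | zero => cases k <;> simp
  | succ n ihn =>
    induction k with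
    | zero => simp
    | succ k ihk =>
      calc (n + 1).multichoose (k + 1) = n.multichoose (k + 1) + (n + 1).multichoose k :=
            Nat.multichoose_succ_succ n k
        _ ≤ (k + 1 + 1) ^ n + (k + 1 + 1) ^ n * (k + 1) := by
            gcongr
            · exact ihn (k + 1)
            · exact ihk.trans (by rw [pow_succ]; gcongr; omega)
        _ = (k + 1 + 1) ^ (n + 1) := by ring

lemma isBigO_mul_natCast_add (a c : ℝ) :
    (fun k : ℕ => a * k + c) =O[atTop] fun k => (k : ℝ) :=
  ((isBigO_refl _ _).const_mul_left a).add
    (isLittleO_const_id_atTop c |>.comp_tendsto tendsto_natCast_atTop_atTop).isBigO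

lemma isBigO_natCast_multichoose (n : ℕ) :
    (fun k : ℕ => (n.multichoose k : ℝ)) =O[atTop] fun k => (k : ℝ) ^ n := by
  refine .trans (.of_norm_le fun k => ?_) ((isBigO_mul_natCast_add 1 1).pow n)
  simpa using mod_cast natMultichoose_le_pow n k

lemma isBigO_multichoose_mul_add (a c : ℝ) (N : ℕ) :
    (fun k : ℕ => Ring.multichoose (a * k + c) N) =O[atTop] fun k => (k : ℝ) ^ N := by
  have hprod (k : ℕ) : Ring.multichoose (a * k + c) N =
      (N ! : ℝ)⁻¹ * ∏ j ∈ Finset.range N, (a * k + (c + j)) := by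
    simp only [← add_assoc, ← factorial_mul_multichoose]
    field_simp
  simp only [hprod]
  refine .const_mul_left ?_ _
  simpa using IsBigO.finsetProd (s := Finset.range N) (fun j _ => isBigO_mul_natCast_add a (c + j))

lemma summable_natMultichoose_mul_pow_mul_multichoose (a c : ℝ) {t : ℝ} (ht : |t| < 1) (n N : ℕ) :
    Summable fun k : ℕ => n.multichoose k * t ^ k * Ring.multichoose (a * k + c) N := by
  have hO : (fun k : ℕ => n.multichoose k * Ring.multichoose (a * k + c) N) =O[atTop]
      fun k => ((k ^ (n + N) : ℕ) : ℝ) := by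
    simpa [pow_add] using (isBigO_natCast_multichoose n).mul (isBigO_multichoose_mul_add a c N)
  simpa only [mul_right_comm] using (summable_norm_mul_geometric_of_norm_lt_one' ht hO).of_norm

lemma hasDerivAt_tsum_mul_pow {𝕜 : Type*} [NontriviallyNormedField 𝕜] [CompleteSpace 𝕜]
    {a : ℕ → 𝕜} (ha : ∀ r : NNReal, Summable fun k => ‖a k‖ * (r : ℝ) ^ k) (z : 𝕜) :
    HasDerivAt (fun z => ∑' k, a k * z ^ k) (∑' k : ℕ, (k + 1) * a (k + 1) * z ^ k) z := by
  set p := FormalMultilinearSeries.ofScalars 𝕜 a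
  have hsum : p.sum = fun z => ∑' k, a k * z ^ k := by
    ext z
    simp [p, FormalMultilinearSeries.sum, mul_comm]
  have hrad : p.radius = ⊤ := p.radius_eq_top_of_summable_norm fun r => by
    simpa [p] using ha r
  have hp : HasFPowerSeriesOnBall p.sum p 0 ⊤ := hrad ▸ p.hasFPowerSeriesOnBall (by simp [hrad])
  have hderiv : HasDerivAt p.sum (fderiv 𝕜 p.sum z 1) z :=
    (hp.differentiableOn.differentiableAt (by simp)).hasFDerivAt.hasDerivAt
  have hd := (hp.fderiv.hasSum (y := z) (by simp)).mapL (ContinuousLinearMap.apply 𝕜 𝕜 1)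
  rw [← hsum]
  convert! hderiv
  simpa [p, mul_comm, mul_left_comm] using hd.tsum_eq

section PrabhakarSeries

variable (α β : ℝ) (n : ℕ) {t : ℝ}

/-- The power series `(1 - X) ^ (-β) * (1 - t * (1 - X) ^ (-α)) ^ (-n)` generating the discrete
analogues of the Prabhakar function `prabhakar`. It is defined by its expansion in powers of `t`,
summed coefficientwise, which converges for `|t| < 1`. -/
noncomputable def prabhakarSeries (t : ℝ) : ℝ⟦X⟧ :=
  ∑' k : ℕ, C (n.multichoose k * t ^ k) * negBinomialSeries (α * k + β)

lemma hasSum_prabhakarSeries (ht : |t| < 1) :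
    HasSum (fun k : ℕ => C (n.multichoose k * t ^ k) * negBinomialSeries (α * k + β))
      (prabhakarSeries α β n t) := by
  refine ((WithPiTopology.summable_iff_summable_coeff ℝ).2 fun N => ?_).hasSum
  simpa only [coeff_C_mul, coeff_negBinomialSeries] using
    summable_natMultichoose_mul_pow_mul_multichoose α β ht n N

lemma prabhakarSeries_zero : prabhakarSeries α β 0 t = negBinomialSeries β := by
  rw [prabhakarSeries, tsum_eq_single 0]
  · simp
  · rintro (_ | k) hk
    · contradiction
    · simp

lemma negBinomialSeries_mul_prabhakarSeries (ht : |t| < 1) (s : ℝ) :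
    negBinomialSeries s * prabhakarSeries α β n t = prabhakarSeries α (s + β) n t := by
  refine ((hasSum_prabhakarSeries α β n ht).mul_left _).unique ?_
  refine (hasSum_prabhakarSeries α (s + β) n ht).congr_fun fun k => ?_
  rw [add_left_comm, negBinomialSeries_add s, mul_left_comm]

lemma prabhakarSeries_succ (ht : |t| < 1) :
    prabhakarSeries α β (n + 1) t =
      prabhakarSeries α β n t + C t * prabhakarSeries α (α + β) (n + 1) t := by
  have h₀ := (hasSum_nat_add_iff' 1).2 (hasSum_prabhakarSeries α β n ht)
  have h₁ := (hasSum_nat_add_iff' 1).2 (hasSum_prabhakarSeries α β (n + 1) ht)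
  have h₂ := (hasSum_prabhakarSeries α (α + β) (n + 1) ht).mul_left (C t)
  have h := h₁.unique ((h₀.add h₂).congr_fun fun k => ?_)
  · simp only [Finset.range_one, map_mul, map_natCast, map_pow, Finset.sum_singleton,
      Nat.multichoose_zero_right, Nat.cast_one, pow_zero, mul_one, CharP.cast_eq_zero, mul_zero,
      zero_add, one_mul] at h
    linear_combination h
  · rw [Nat.multichoose_succ_succ, show α * (k + 1 : ℕ) + β = α * k + (α + β) by push_cast; ring]
    simp only [Nat.cast_add, add_mul, map_add, map_mul, pow_succ]
    ring

end PrabhakarSeries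

lemma coeff_prabhakarSeries_nonneg {α β t : ℝ} {n : ℕ} (hα : 0 ≤ α) (hα1 : α ≤ 1) (hβ : α * n ≤ β)
    (ht : -1 < t) (ht' : t ≤ 0) (N : ℕ) : 0 ≤ coeff N (prabhakarSeries α β n t) := by
  have habs : |t| < 1 := abs_lt.2 ⟨ht, by linarith⟩
  induction n generalizing β N with
  | zero =>
    rw [prabhakarSeries_zero, coeff_negBinomialSeries]
    exact multichoose_nonneg (by simpa using hβ) N
  | succ n ih =>
    have hmul : (negBinomialSeries (-α) - C t) * prabhakarSeries α β (n + 1) t =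
        prabhakarSeries α (-α + β) n t := by
      rw [sub_mul, negBinomialSeries_mul_prabhakarSeries _ _ _ habs,
        prabhakarSeries_succ _ _ _ habs, add_neg_cancel_left, add_sub_cancel_right]
    refine coeff_nonneg_of_coeff_mul_nonneg (f := negBinomialSeries (-α) - C t) ?_ (fun m => ?_)
      (fun m => ?_) N
    · rw [map_sub, coeff_negBinomialSeries, Ring.multichoose_zero_right, coeff_zero_C]
      linarith
    · rw [map_sub, coeff_negBinomialSeries, coeff_C, if_neg m.succ_ne_zero, sub_zero]
      exact multichoose_succ_nonpos (by linarith) (by linarith) m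
    · rw [hmul]
      exact ih (by push_cast at hβ; linarith) m

section GammaSeq

lemma one_add_mul_one_sub_inv_le_rpow {x s : ℝ} (hx : 0 < x) (hs : 0 ≤ s) :
    1 + s * (1 - x⁻¹) ≤ x ^ s := by
  calc 1 + s * (1 - x⁻¹) ≤ Real.log x * s + 1 := by
        linarith [mul_le_mul_of_nonneg_left (Real.one_sub_inv_le_log_of_pos hx) hs]
    _ ≤ Real.exp (Real.log x * s) := Real.add_one_le_exp _
    _ = x ^ s := (Real.rpow_def_of_pos hx s).symm

lemma inv_GammaSeq_eq (s : ℝ) (N : ℕ) :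
    (Real.GammaSeq s N)⁻¹ = (N + 1) * (N : ℝ) ^ (-s) * Ring.multichoose s (N + 1) := by
  have : (N ! : ℝ) ≠ 0 := by positivity
  rw [Real.GammaSeq, ← factorial_mul_multichoose, Real.rpow_neg N.cast_nonneg, Nat.factorial_succ,
    inv_div, Nat.cast_mul, Nat.cast_succ]
  field_simp

lemma GammaSeq_pos {s : ℝ} (hs : 0 < s) {N : ℕ} (hN : 0 < N) : 0 < Real.GammaSeq s N := by
  unfold Real.GammaSeq
  positivity

lemma GammaSeq_succ (s : ℝ) {N : ℕ} (hN : 0 < N) :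
    Real.GammaSeq s (N + 1) =
      Real.GammaSeq s N * (((N + 1) / N) ^ s * ((N + 1) / (s + (N + 1)))) := by
  have hN' : (0 : ℝ) < N := mod_cast hN
  rw [Real.GammaSeq, Real.GammaSeq, Finset.prod_range_succ _ (N + 1), Nat.factorial_succ,
    Real.div_rpow (by positivity) hN'.le]
  push_cast
  field_simp

lemma GammaSeq_monotone {s : ℝ} (hs : 0 < s) : Monotone (Real.GammaSeq s) := by
  refine monotone_nat_of_le_succ fun N => ?_
  obtain rfl | hN := N.eq_zero_or_pos
  · simpa [Real.GammaSeq, Real.zero_rpow hs.ne'] using (GammaSeq_pos hs one_pos).le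
  · have : (0 : ℝ) < N := mod_cast hN
    rw [GammaSeq_succ s hN]
    refine le_mul_of_one_le_right (GammaSeq_pos hs hN).le ?_
    rw [← mul_div_assoc, one_le_div (by positivity)]
    calc s + (N + 1) = (1 + s * (1 - ((N + 1 : ℝ) / N)⁻¹)) * (N + 1) := by field_simp; ring
      _ ≤ ((N + 1) / N) ^ s * (N + 1) := by
        gcongr
        exact one_add_mul_one_sub_inv_le_rpow (by positivity) hs.le

lemma GammaSeq_le_Gamma {s : ℝ} (hs : 0 < s) (N : ℕ) : Real.GammaSeq s N ≤ Real.Gamma s :=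
  (GammaSeq_monotone hs).ge_of_tendsto (Real.GammaSeq_tendsto_Gamma s) N

end GammaSeq

lemma hasSum_div_GammaSeq (α β z : ℝ) (n : ℕ) {N : ℕ} (hN : 0 < N)
    (hz : |z * (N : ℝ) ^ (-α)| < 1) :
    HasSum (fun k : ℕ => n.multichoose k / Real.GammaSeq (α * k + β) N * z ^ k)
      ((N + 1) * (N : ℝ) ^ (-β) *
        coeff (N + 1) (prabhakarSeries α β n (z * (N : ℝ) ^ (-α)))) := by
  have hN' : (0 : ℝ) < N := mod_cast hN
  refine (((WithPiTopology.hasSum_iff_hasSum_coeff ℝ).1 (hasSum_prabhakarSeries α β n hz)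
    (N + 1)).mul_left _).congr_fun fun k => ?_
  rw [coeff_C_mul, coeff_negBinomialSeries, div_eq_mul_inv, inv_GammaSeq_eq, neg_add, ← neg_mul,
    Real.rpow_add hN', Real.rpow_mul hN'.le, Real.rpow_natCast, mul_pow]
  ring

lemma eventually_abs_mul_rpow_neg_lt_one {α : ℝ} (hα : 0 < α) (z : ℝ) :
    ∀ᶠ N : ℕ in atTop, 0 < N ∧ |z * (N : ℝ) ^ (-α)| < 1 := by
  have hlim : Tendsto (fun N : ℕ => z * (N : ℝ) ^ (-α)) atTop (𝓝 0) := by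
    simpa using ((tendsto_rpow_neg_atTop hα).comp tendsto_natCast_atTop_atTop).const_mul z
  exact (eventually_gt_atTop 0).and (hlim.abs.eventually_lt_const (by simp))

/-- Prabhakar's three-parameter Mittag-Leffler function `E^n_{α,β}(z)`, for a natural upper
parameter `n`, so that its rising factorial `(n)_k / k!` is `n.multichoose k`. The case `n = 1` is
`E_{α,β}`, and unlike the two-parameter functions the family is closed under differentiation, up
to scalar factors. -/
noncomputable def prabhakar (α β : ℝ) (n : ℕ) (z : ℝ) : ℝ :=
  ∑' k : ℕ, n.multichoose k / Real.Gamma (α * k + β) * z ^ k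

lemma prabhakar_one (α β z : ℝ) : prabhakar α β 1 z = ∑' k : ℕ, z ^ k / Real.Gamma (α * k + β) := by
  simp only [prabhakar, Nat.multichoose_one, Nat.cast_one, one_div_mul_eq_div]

section Prabhakar

variable {α β : ℝ} (hα : 0 < α) (hβ : 0 < β) (n : ℕ)
include hα hβ

lemma summable_prabhakar {r : ℝ} (hr : 0 ≤ r) :
    Summable fun k : ℕ => n.multichoose k / Real.Gamma (α * k + β) * r ^ k := by
  obtain ⟨N, hN, hrN⟩ := (eventually_abs_mul_rpow_neg_lt_one hα r).exists
  refine .of_nonneg_of_le (fun k => ?_) (fun k => ?_) (hasSum_div_GammaSeq α β r n hN hrN).summable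
  · have := Real.Gamma_pos_of_pos (s := α * k + β) (by positivity)
    positivity
  · have := GammaSeq_pos (s := α * k + β) (by positivity) hN
    gcongr
    exact GammaSeq_le_Gamma (by positivity) N

lemma hasDerivAt_prabhakar (z : ℝ) :
    HasDerivAt (prabhakar α β n) (n * prabhakar α (α + β) (n + 1) z) z := by
  have hcoeff (k : ℕ) : (k + 1) * n.multichoose (k + 1) = n * (n + 1).multichoose k := by
    rw [Nat.multichoose_eq, Nat.multichoose_eq, ← add_assoc, Nat.add_sub_cancel, mul_comm,
      Nat.choose_succ_right_eq, Nat.add_sub_cancel, mul_comm, Nat.succ_add_sub_one]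
  convert! hasDerivAt_tsum_mul_pow (a := fun k : ℕ => n.multichoose k / Real.Gamma (α * k + β))
    (fun r => ?_) z using 1
  · rw [prabhakar, ← tsum_mul_left]
    refine tsum_congr fun k => ?_
    rw [← mul_assoc, mul_div_assoc', mul_div_assoc', ← Nat.cast_mul, ← hcoeff]
    push_cast
    ring_nf
  · refine (summable_prabhakar hα hβ n r.2).congr fun k => ?_
    rw [Real.norm_of_nonneg]
    · rfl
    · have := Real.Gamma_pos_of_pos (s := α * k + β) (by positivity)
      positivity

lemma iteratedDeriv_prabhakar (m : ℕ) :
    iteratedDeriv m (prabhakar α β n) =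
      fun z => n.ascFactorial m * prabhakar α (α * m + β) (n + m) z := by
  induction m with
  | zero => simp
  | succ m ih =>
    ext z
    rw [iteratedDeriv_succ, ih,
      ((hasDerivAt_prabhakar hα (by positivity) (n + m) z).const_mul _).deriv,
      Nat.ascFactorial_succ]
    push_cast
    ring_nf

lemma contDiff_prabhakar : ContDiff ℝ (⊤ : ℕ∞) (prabhakar α β n) := by
  refine contDiff_of_differentiable_iteratedDeriv fun m _ z => ?_
  rw [iteratedDeriv_prabhakar hα hβ n m]
  exact ((hasDerivAt_prabhakar hα (by positivity) (n + m) z).const_mul _).differentiableAt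

lemma tendsto_tsum_div_GammaSeq (z : ℝ) :
    Tendsto (fun N : ℕ => ∑' k : ℕ, n.multichoose k / Real.GammaSeq (α * k + β) N * z ^ k)
      atTop (𝓝 (prabhakar α β n z)) := by
  obtain ⟨N, hN, hzN⟩ := (eventually_abs_mul_rpow_neg_lt_one hα |z|).exists
  refine tendsto_tsum_of_dominated_convergence (hasSum_div_GammaSeq α β |z| n hN hzN).summable
    (fun k => ?_) ?_
  · exact (tendsto_const_nhds.div (Real.GammaSeq_tendsto_Gamma _)
      (Real.Gamma_pos_of_pos (by positivity)).ne').mul_const _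
  · filter_upwards [eventually_ge_atTop N] with M hM k
    have hs : 0 < α * k + β := by positivity
    have := GammaSeq_pos hs hN
    rw [norm_mul, norm_pow, norm_div, Real.norm_natCast, Real.norm_eq_abs z,
      Real.norm_of_nonneg (GammaSeq_pos hs (hN.trans_le hM)).le]
    gcongr
    exact GammaSeq_monotone hs hM

end Prabhakar

lemma prabhakar_nonneg {α β z : ℝ} {n : ℕ} (hα : 0 < α) (hα1 : α ≤ 1) (hβ : 0 < β)
    (hnβ : α * n ≤ β) (hz : z ≤ 0) : 0 ≤ prabhakar α β n z := by
  refine ge_of_tendsto (tendsto_tsum_div_GammaSeq hα hβ n z) ?_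
  filter_upwards [eventually_abs_mul_rpow_neg_lt_one hα z] with N ⟨hN, hzN⟩
  rw [(hasSum_div_GammaSeq α β z n hN hzN).tsum_eq]
  have := coeff_prabhakarSeries_nonneg hα.le hα1 hnβ (abs_lt.1 hzN).1
    (mul_nonpos_of_nonpos_of_nonneg hz (by positivity)) (N + 1)
  positivity

/-- (Pollard/Schneider) For `0 < α ≤ 1` and `β ≥ α`, the function
`h(x) = E_{α,β}(−x) = ∑_k (−x)^k/Γ(αk+β)` is smooth on `(0,∞)` and completely
monotone there: `(−1)^n h^{(n)}(x) ≥ 0` for all `n ≥ 0`, `x > 0`. -/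
theorem mittagLeffler_completely_monotone (α β : ℝ) (hα : 0 < α) (hα1 : α ≤ 1)
    (hβ : α ≤ β) :
    ContDiffOn ℝ (⊤ : ℕ∞) (fun x : ℝ => ∑' k : ℕ, (-x) ^ k / Real.Gamma (α * k + β))
        (Set.Ioi 0) ∧
      ∀ n : ℕ, ∀ x : ℝ, 0 < x →
        0 ≤ (-1 : ℝ) ^ n *
          iteratedDerivWithin n
            (fun x : ℝ => ∑' k : ℕ, (-x) ^ k / Real.Gamma (α * k + β)) (Set.Ioi 0) x := by
  have hβ₀ : 0 < β := hα.trans_le hβ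
  simp only [← prabhakar_one]
  refine ⟨((contDiff_prabhakar hα hβ₀ 1).comp contDiff_neg).contDiffOn, fun n x hx => ?_⟩
  rw [iteratedDerivWithin_of_isOpen isOpen_Ioi hx, iteratedDeriv_comp_neg,
    iteratedDeriv_prabhakar hα hβ₀, smul_eq_mul, ← mul_assoc, ← mul_pow, neg_one_mul, neg_neg,
    one_pow, one_mul]
  have hnβ : α * (1 + n : ℕ) ≤ α * n + β := by push_cast; linarith
  exact mul_nonneg (Nat.cast_nonneg _)
    (prabhakar_nonneg hα hα1 (by positivity) hnβ (neg_nonpos.2 hx.le))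
end

section
/- Let 0 < α < 1 and α ≤ β ≤ 1 be real numbers. Then for every t > 0, t^{β−1} E_{α,β}(−t^α) = ∫_0^∞ e^{−st} K_{α,β}(s) ds, where K_{α,β}(s) = s^{α−β} [ sin((β−α)π) + s^α sin(βπ) ] / ( π [ s^{2α} + 2 s^α cos(απ) + 1 ] ). -/
open Real

/-! Hankel's formula `t^{c-1} / Γ(c) = (2πi)⁻¹ ∫ e^{tw} w^{-c} dw` turns
`t^{β-1} E_{α,β}(-t^α)` into a geometric series under the integral sign, whose sum for `|w| > 1`
is the integrand `e^{tw} w^{α-β} / (w^α + 1)`. Since `α < 1`, `|arg w^α| ≤ απ < π` in the whole cut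
plane, so `w^α + 1` stays away from `0` and the contour can be collapsed onto the negative real
axis. What remains is the jump across the cut, twice the imaginary part of the upper boundary
value, and this is the density `K_{α,β}`.

Hankel's formula itself follows in the same way: for `c < 1` collapsing the contour gives a Gamma
integral and the reflection formula applies, for `c = 1` there is no jump and only the residue `1`
at `w = 0` survives, and integration by parts raises `c` by `1`. -/

section

open MeasureTheory Filter Topology Set
open Complex (I)
open scoped ComplexConjugate

section ExpSubstitution

variable {E : Type*} [NormedAddCommGroup E] [NormedSpace ℝ E]

theorem integral_exp_smul_comp_exp (g : ℝ → E) :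
    ∫ x, exp x • g (exp x) = ∫ s in Ioi 0, g s := by
  rw [← range_exp, ← image_univ, integral_image_eq_integral_abs_deriv_smul MeasurableSet.univ
    (fun x _ ↦ (hasDerivAt_exp x).hasDerivWithinAt) exp_injective.injOn]
  simp only [abs_exp, setIntegral_univ]

theorem integrable_exp_smul_comp_exp {g : ℝ → E} (hg : IntegrableOn g (Ioi 0)) :
    Integrable fun x ↦ exp x • g (exp x) := by
  rw [← range_exp, ← image_univ, integrableOn_image_iff_integrableOn_abs_deriv_smul
    MeasurableSet.univ (fun x _ ↦ (hasDerivAt_exp x).hasDerivWithinAt) exp_injective.injOn] at hg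
  simpa only [abs_exp, integrableOn_univ] using hg

end ExpSubstitution

theorem Gamma_inv_eq_sin_mul_Gamma_one_sub {c : ℝ} (hc : c < 1) :
    (Gamma c)⁻¹ = sin (π * c) / π * Gamma (1 - c) := by
  have hΓ : Gamma (1 - c) ≠ 0 := (Gamma_pos_of_pos (sub_pos.2 hc)).ne'
  rw [← inv_div, ← Gamma_mul_Gamma_one_sub, mul_inv, inv_mul_cancel_right₀ hΓ]

theorem cos_half_im_le_norm_exp_add_one {w : ℂ} (hw : |w.im| ≤ π) :
    cos (w.im / 2) ≤ ‖Complex.exp w + 1‖ := by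
  have hcos : 0 ≤ cos (w.im / 2) :=
    cos_nonneg_of_mem_Icc ⟨by linarith [(abs_le.1 hw).1], by linarith [(abs_le.1 hw).2]⟩
  -- Rotating by `e^{-i Im w / 2}` puts both summands at an angle `±Im w / 2` from the real axis.
  let rotation : ℂ := Complex.exp ((-(w.im / 2) : ℝ) * I)
  have hre : (rotation * (Complex.exp w + 1)).re = (exp w.re + 1) * cos (w.im / 2) := by
    rw [mul_add, ← Complex.exp_add, mul_one, Complex.add_re, Complex.exp_ofReal_mul_I_re,
      Complex.exp_re, Complex.add_re, Complex.add_im, Complex.re_ofReal_mul, Complex.im_ofReal_mul,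
      Complex.I_re, Complex.I_im, cos_neg]
    ring_nf
  calc cos (w.im / 2) ≤ (exp w.re + 1) * cos (w.im / 2) := by nlinarith [exp_pos w.re]
    _ ≤ ‖rotation * (Complex.exp w + 1)‖ := hre ▸ Complex.re_le_norm _
    _ = ‖Complex.exp w + 1‖ := by rw [norm_mul, Complex.norm_exp_ofReal_mul_I, one_mul]

/-- The closed strip `|Im z| ≤ π`, which `z ↦ e^z` maps onto the punctured `w`-plane; its two edges
are the two sides of the cut along the negative reals. In the coordinate `z` the principal powers
`w ^ a` become the entire functions `e^{az}`, also on the cut. -/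
def hankelStrip : Set ℂ := Complex.im ⁻¹' Icc (-π) π

theorem mem_hankelStrip {z : ℂ} : z ∈ hankelStrip ↔ |z.im| ≤ π := by
  rw [hankelStrip, mem_preimage, mem_Icc, abs_le]

theorem add_pi_mul_I_mem_hankelStrip (x : ℝ) : (x + π * I : ℂ) ∈ hankelStrip := by
  simp [hankelStrip, pi_pos.le]

theorem sub_pi_mul_I_mem_hankelStrip (x : ℝ) : (x - π * I : ℂ) ∈ hankelStrip := by
  simp [hankelStrip, pi_pos.le]

/-- The integral `(2πi)⁻¹ ∫ F(z) dz` along the Hankel contour in the coordinate `z = log w`: in from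
`+∞ - πi` along the lower side of the cut, up the segment `Re z = 1` (a circle in the `w`-plane) and
out to `+∞ + πi` along the upper side. The factor `dw / dz = e^z` is part of `F`, and any positive
abscissa would serve in place of `1`. -/
noncomputable def hankelIntegral (F : ℂ → ℂ) : ℂ :=
  (2 * π * I)⁻¹ * (I * (∫ y in (-π)..π, F (1 + y * I)) +
    (∫ x in Ioi (1 : ℝ), F (x + π * I)) - ∫ x in Ioi (1 : ℝ), F (x - π * I))

/-- Integrability of `F` on the three pieces of the Hankel contour, without which `hankelIntegral F`
contains junk values. -/
structure HankelIntegrable (F : ℂ → ℂ) : Prop where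
  vertical : IntervalIntegrable (fun y : ℝ ↦ F (1 + y * I)) volume (-π) π
  upper : IntegrableOn (fun x : ℝ ↦ F (x + π * I)) (Ioi 1)
  lower : IntegrableOn (fun x : ℝ ↦ F (x - π * I)) (Ioi 1)

namespace HankelIntegrable

variable {F G : ℂ → ℂ}

protected theorem const_mul (hF : HankelIntegrable F) (a : ℂ) :
    HankelIntegrable fun z ↦ a * F z :=
  ⟨hF.vertical.const_mul a, hF.upper.const_mul a, hF.lower.const_mul a⟩

protected theorem sub (hF : HankelIntegrable F) (hG : HankelIntegrable G) :
    HankelIntegrable fun z ↦ F z - G z :=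
  ⟨hF.vertical.sub hG.vertical, hF.upper.sub hG.upper, hF.lower.sub hG.lower⟩

theorem mul_bdd (hF : HankelIntegrable F) {C : ℝ} (hG : ContinuousOn G hankelStrip)
    (hC : ∀ z ∈ hankelStrip, ‖G z‖ ≤ C) : HankelIntegrable fun z ↦ F z * G z := by
  have hvertical (y : ℝ) (hy : y ∈ uIcc (-π) π) : (1 + y * I : ℂ) ∈ hankelStrip := by
    rw [uIcc_of_le (neg_le_self pi_pos.le)] at hy
    simpa [hankelStrip] using hy
  refine ⟨hF.vertical.mul_continuousOn (hG.comp (by fun_prop) hvertical),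
    hF.upper.mul_bdd (c := C) ?_ ?_, hF.lower.mul_bdd (c := C) ?_ ?_⟩
  · exact (hG.comp_continuous (by fun_prop) add_pi_mul_I_mem_hankelStrip).aestronglyMeasurable
  · exact .of_forall fun x ↦ hC _ (add_pi_mul_I_mem_hankelStrip x)
  · exact (hG.comp_continuous (by fun_prop) sub_pi_mul_I_mem_hankelStrip).aestronglyMeasurable
  · exact .of_forall fun x ↦ hC _ (sub_pi_mul_I_mem_hankelStrip x)

theorem hankelIntegral_sub (hF : HankelIntegrable F) (hG : HankelIntegrable G) :
    hankelIntegral (fun z ↦ F z - G z) = hankelIntegral F - hankelIntegral G := by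
  rw [hankelIntegral, intervalIntegral.integral_sub hF.vertical hG.vertical,
    integral_sub hF.upper hG.upper, integral_sub hF.lower hG.lower]
  simp only [hankelIntegral]
  ring

end HankelIntegrable

theorem hankelIntegral_const_mul (a : ℂ) (F : ℂ → ℂ) :
    hankelIntegral (fun z ↦ a * F z) = a * hankelIntegral F := by
  simp only [hankelIntegral, intervalIntegral.integral_const_mul, integral_const_mul]
  ring

theorem hasSum_hankelIntegral_of_dominated {ι : Type*} [Countable ι] {f : ι → ℂ → ℂ}
    {F g : ℂ → ℂ} {b : ι → ℝ} (hf : ∀ k, HankelIntegrable (f k)) (hg : HankelIntegrable g)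
    (hb : Summable b) (hbound : ∀ k z, 1 ≤ z.re → ‖f k z‖ ≤ b k * ‖g z‖)
    (hsum : ∀ z, 1 ≤ z.re → HasSum (fun k ↦ f k z) (F z)) :
    HasSum (fun k ↦ hankelIntegral (f k)) (hankelIntegral F) := by
  have hsum_edge (w : ℂ → ℂ) (hw : ∀ z, (w z).re = z.re)
      (hfw : ∀ k, IntegrableOn (fun x : ℝ ↦ f k (w x)) (Ioi 1))
      (hgw : IntegrableOn (fun x : ℝ ↦ g (w x)) (Ioi 1)) :
      HasSum (fun k ↦ ∫ x in Ioi (1 : ℝ), f k (w x)) (∫ x in Ioi (1 : ℝ), F (w x)) := by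
    have hre : ∀ᵐ x : ℝ ∂volume.restrict (Ioi 1), 1 ≤ (w x).re := by
      filter_upwards [ae_restrict_mem measurableSet_Ioi] with x hx
      rw [hw]
      exact (mem_Ioi.1 hx).le
    refine hasSum_integral_of_dominated_convergence (fun k x ↦ b k * ‖g (w x)‖)
      (fun k ↦ (hfw k).aestronglyMeasurable) (fun k ↦ ?_) ?_ ?_ ?_
    · filter_upwards [hre] with x hx using hbound k _ hx
    · exact .of_forall fun x ↦ hb.mul_right _
    · simpa only [tsum_mul_right] using hgw.norm.const_mul _
    · filter_upwards [hre] with x hx using hsum _ hx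
  have hsum_vertical : HasSum (fun k ↦ ∫ y in (-π)..π, f k (1 + y * I))
      (∫ y in (-π)..π, F (1 + y * I)) :=
    intervalIntegral.hasSum_integral_of_dominated_convergence
      (fun k y ↦ b k * ‖g (1 + y * I)‖)
      (fun k ↦ uIoc_of_le (neg_le_self pi_pos.le) ▸ (hf k).vertical.1.aestronglyMeasurable)
      (fun k ↦ .of_forall fun y _ ↦ hbound k _ (by simp))
      (.of_forall fun y _ ↦ hb.mul_right _)
      (by simpa only [tsum_mul_right] using hg.vertical.norm.const_mul _)
      (.of_forall fun y _ ↦ hsum _ (by simp))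
  exact (((hsum_vertical.mul_left I).add
    (hsum_edge (· + π * I) (by simp) (fun k ↦ (hf k).upper) hg.upper)).sub
    (hsum_edge (· - π * I) (by simp) (fun k ↦ (hf k).lower) hg.lower)).mul_left _

theorem hankelIntegral_deriv_eq_zero {F F' : ℂ → ℂ} (hF : ∀ z, HasDerivAt F (F' z) z)
    (hint : HankelIntegrable F')
    (hupper : Tendsto (fun x : ℝ ↦ F (x + π * I)) atTop (𝓝 0))
    (hlower : Tendsto (fun x : ℝ ↦ F (x - π * I)) atTop (𝓝 0)) :
    hankelIntegral F' = 0 := by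
  have hderiv_vertical (y : ℝ) : HasDerivAt (fun y : ℝ ↦ F (1 + y * I)) (I * F' (1 + y * I)) y := by
    have hline : HasDerivAt (fun y : ℝ ↦ 1 + (y : ℂ) * I) (1 * I) y :=
      ((Complex.ofRealCLM.hasDerivAt (x := y)).mul_const I).const_add 1
    exact ((hF _).comp y hline).congr_deriv (by ring)
  have hderiv_horizontal (a : ℂ) (x : ℝ) :
      HasDerivAt (fun x : ℝ ↦ F (x + a)) (F' (x + a)) x := by
    have hline : HasDerivAt (fun x : ℝ ↦ (x : ℂ) + a) 1 x :=
      (Complex.ofRealCLM.hasDerivAt (x := x)).add_const a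
    exact ((hF _).comp x hline).congr_deriv (mul_one _)
  have hv := intervalIntegral.integral_eq_sub_of_hasDerivAt (a := -π) (b := π)
    (fun y _ ↦ hderiv_vertical y) (hint.vertical.const_mul I)
  have hu := integral_Ioi_of_hasDerivAt_of_tendsto' (a := 1)
    (fun x _ ↦ hderiv_horizontal (π * I) x) hint.upper hupper
  have hl := integral_Ioi_of_hasDerivAt_of_tendsto' (a := 1)
    (fun x _ ↦ hderiv_horizontal (-(π * I)) x)
    (by simpa only [← sub_eq_add_neg] using hint.lower)
    (by simpa only [← sub_eq_add_neg] using hlower)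
  rw [intervalIntegral.integral_const_mul] at hv
  simp only [← sub_eq_add_neg] at hl
  rw [hankelIntegral, hv, hu, hl]
  push_cast
  ring_nf

theorem tendsto_intervalIntegral_vertical {F : ℂ → ℂ} {v : ℂ} (hF : ContinuousOn F hankelStrip)
    (hv : Tendsto F (comap Complex.re atBot ⊓ 𝓟 hankelStrip) (𝓝 v)) :
    Tendsto (fun M : ℝ ↦ ∫ y in (-π)..π, F (M + y * I)) atBot (𝓝 (2 * π * v)) := by
  have hIoc : uIoc (-π) π = Ioc (-π) π := uIoc_of_le (neg_le_self pi_pos.le)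
  have hmem {M y : ℝ} (hy : y ∈ Ioc (-π) π) : (M + y * I : ℂ) ∈ hankelStrip := by
    simpa [hankelStrip] using Ioc_subset_Icc_self hy
  have hline {y : ℝ} (hy : y ∈ Ioc (-π) π) : Tendsto (fun M : ℝ ↦ (M + y * I : ℂ)) atBot
      (comap Complex.re atBot ⊓ 𝓟 hankelStrip) :=
    tendsto_inf.2 ⟨tendsto_comap_iff.2 (tendsto_id.congr fun M ↦ by simp),
      tendsto_principal.2 (.of_forall fun M ↦ hmem hy)⟩
  have hbound : ∀ᶠ M : ℝ in atBot, ∀ y ∈ Ioc (-π) π, ‖F (M + y * I)‖ ≤ ‖v‖ + 1 := by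
    have hnear := hv.norm.eventually_le_const (lt_add_one ‖v‖)
    rw [eventually_inf_principal, eventually_comap] at hnear
    filter_upwards [hnear] with M hM y hy using hM _ (by simp) (hmem hy)
  have hlim : Tendsto (fun M : ℝ ↦ ∫ y in (-π)..π, F (M + y * I)) atBot
      (𝓝 (∫ _ in (-π)..π, v)) := by
    refine intervalIntegral.tendsto_integral_filter_of_dominated_convergence (fun _ ↦ ‖v‖ + 1)
      (.of_forall fun M ↦ ?_) ?_ intervalIntegrable_const
      (.of_forall fun y hy ↦ hv.comp (hline (hIoc ▸ hy)))
    · rw [hIoc]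
      exact (hF.comp (by fun_prop) fun y hy ↦ hmem hy).aestronglyMeasurable measurableSet_Ioc
    · filter_upwards [hbound] with M hM
      exact .of_forall fun y hy ↦ hM y (hIoc ▸ hy)
  rw [intervalIntegral.integral_const, Complex.real_smul] at hlim
  convert hlim using 2
  push_cast
  ring

theorem integral_vertical_eq_add_integral_jump {F : ℂ → ℂ}
    (hF : DifferentiableOn ℂ F hankelStrip) (M : ℝ) :
    I * (∫ y in (-π)..π, F (1 + y * I)) =
      I * (∫ y in (-π)..π, F (M + y * I)) +
        ∫ x in M..1, (F (x + π * I) - F (x - π * I)) := by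
  have hsub : uIcc M 1 ×ℂ uIcc (-π) π ⊆ hankelStrip := fun z hz ↦ by
    simpa only [hankelStrip, uIcc_of_le (neg_le_self pi_pos.le)] using hz.2
  have hrect := Complex.integral_boundary_rect_eq_zero_of_differentiableOn F
    ⟨M, -π⟩ ⟨1, π⟩ (hF.mono hsub)
  simp only [smul_eq_mul, Complex.ofReal_neg, neg_mul, ← sub_eq_add_neg,
    Complex.ofReal_one] at hrect
  rw [intervalIntegral.integral_sub]
  · linear_combination hrect
  · exact (hF.continuousOn.comp_continuous (by fun_prop)
      add_pi_mul_I_mem_hankelStrip).intervalIntegrable _ _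
  · exact (hF.continuousOn.comp_continuous (by fun_prop)
      sub_pi_mul_I_mem_hankelStrip).intervalIntegrable _ _

theorem hankelIntegral_eq_of_tendsto {F : ℂ → ℂ} {v : ℂ}
    (hF : DifferentiableOn ℂ F hankelStrip) (hint : HankelIntegrable F)
    (hv : Tendsto F (comap Complex.re atBot ⊓ 𝓟 hankelStrip) (𝓝 v))
    (hjump : Integrable fun x : ℝ ↦ F (x + π * I) - F (x - π * I)) :
    hankelIntegral F = v + (2 * π * I)⁻¹ * ∫ x : ℝ, (F (x + π * I) - F (x - π * I)) := by
  have hlim := ((tendsto_intervalIntegral_vertical hF.continuousOn hv).const_mul I).add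
    (intervalIntegral_tendsto_integral_Iic 1 hjump.integrableOn tendsto_id)
  have hvertical := tendsto_nhds_unique
    (tendsto_const_nhds.congr (integral_vertical_eq_add_integral_jump hF)) hlim
  have hlimit : (2 * π * I)⁻¹ * (I * (2 * π * v)) = v := by
    field_simp [Complex.two_pi_I_ne_zero]
  rw [hankelIntegral, hvertical, add_sub_assoc, ← integral_sub hint.upper hint.lower, add_assoc,
    intervalIntegral.integral_Iic_add_Ioi hjump.integrableOn hjump.integrableOn, mul_add, hlimit]

theorem hankelIntegral_eq_of_tendsto_of_conj {F : ℂ → ℂ} {v : ℂ}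
    (hF : DifferentiableOn ℂ F hankelStrip) (hint : HankelIntegrable F)
    (hv : Tendsto F (comap Complex.re atBot ⊓ 𝓟 hankelStrip) (𝓝 v))
    (hconj : ∀ z, F (conj z) = conj (F z))
    (him : Integrable fun x : ℝ ↦ (F (x + π * I)).im) :
    hankelIntegral F = v + ((∫ x : ℝ, (F (x + π * I)).im / π : ℝ) : ℂ) := by
  have hjump (x : ℝ) : F (x + π * I) - F (x - π * I) = 2 * I * ((F (x + π * I)).im : ℂ) := by
    have hlower : F (x - π * I) = conj (F (x + π * I)) := by
      rw [← hconj]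
      simp [sub_eq_add_neg]
    rw [hlower, Complex.sub_conj]
    push_cast
    ring
  have hpi : (π : ℂ) ≠ 0 := Complex.ofReal_ne_zero.2 pi_ne_zero
  rw [hankelIntegral_eq_of_tendsto hF hint hv]
  · simp only [hjump]
    rw [integral_const_mul, integral_complex_ofReal, integral_div]
    push_cast
    field_simp [Complex.I_ne_zero]
  · simp only [hjump]
    exact him.ofReal.const_mul _

/-- The integrand `e^{tw} w^{-c} dw` of Hankel's formula for `t^{c-1} / Γ(c)`, pulled back by
`w = e^z`. -/
noncomputable def hankelKernel (t c : ℝ) (z : ℂ) : ℂ :=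
  Complex.exp (t * Complex.exp z + (1 - c) * z)

/-- The integrand `e^{-ts} s^{-c} ds` of the Gamma integral, pulled back by `s = e^x`; it is the
modulus of `hankelKernel t c` on both edges of the strip. -/
noncomputable def rayKernel (t c x : ℝ) : ℝ :=
  exp (-(t * exp x) + (1 - c) * x)

section RayKernel

variable {t c d x : ℝ}

theorem rayKernel_pos (t c x : ℝ) : 0 < rayKernel t c x := exp_pos _

theorem continuous_rayKernel (t c : ℝ) : Continuous (rayKernel t c) := by
  unfold rayKernel
  fun_prop

theorem rayKernel_eq_exp_smul (t c x : ℝ) :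
    rayKernel t c x = exp x • (exp x ^ (-c) * exp (-(t * exp x))) := by
  rw [rayKernel, smul_eq_mul, ← exp_mul, ← exp_add, ← exp_add]
  ring_nf

theorem rayKernel_anti (hcd : c ≤ d) (hx : 0 ≤ x) : rayKernel t d x ≤ rayKernel t c x := by
  unfold rayKernel
  gcongr

theorem integrable_rayKernel (ht : 0 < t) (hc : c < 1) : Integrable (rayKernel t c) := by
  have hint := integrableOn_rpow_mul_exp_neg_mul_rpow (neg_lt_neg hc) one_pos ht
  simp only [rpow_one, neg_mul] at hint
  simpa only [← rayKernel_eq_exp_smul] using integrable_exp_smul_comp_exp hint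

theorem integral_rayKernel (ht : 0 < t) (hc : c < 1) :
    ∫ x, rayKernel t c x = t ^ (c - 1) * Gamma (1 - c) := by
  have hint := integral_rpow_mul_exp_neg_mul_Ioi (sub_pos.2 hc) ht
  rw [sub_sub_cancel_left, one_div, inv_rpow ht.le, ← rpow_neg ht.le, neg_sub] at hint
  simp only [rayKernel_eq_exp_smul]
  rw [integral_exp_smul_comp_exp fun s ↦ s ^ (-c) * exp (-(t * s)), hint]

theorem integrableOn_rayKernel (ht : 0 < t) (c : ℝ) : IntegrableOn (rayKernel t c) (Ioi 1) := by
  have hint := (integrable_rayKernel ht (min_lt_of_right_lt one_half_lt_one : min c (1 / 2) < 1))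
  refine hint.integrableOn.mono' (continuous_rayKernel t c).aestronglyMeasurable ?_
  filter_upwards [ae_restrict_mem measurableSet_Ioi] with x hx
  rw [norm_of_nonneg (rayKernel_pos _ _ _).le]
  exact rayKernel_anti (min_le_left _ _) (zero_le_one.trans (mem_Ioi.1 hx).le)

theorem tendsto_rayKernel_atTop (ht : 0 < t) (c : ℝ) : Tendsto (rayKernel t c) atTop (𝓝 0) := by
  have hlim := (tendsto_rpow_mul_exp_neg_mul_atTop_nhds_zero (1 - c) t ht).comp tendsto_exp_atTop
  refine hlim.congr fun x ↦ ?_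
  rw [Function.comp_apply, rayKernel, ← exp_mul, ← exp_add]
  ring_nf

end RayKernel

section HankelKernel

variable {t c : ℝ}

theorem differentiable_hankelKernel (t c : ℝ) : Differentiable ℂ (hankelKernel t c) := by
  unfold hankelKernel
  fun_prop

theorem hankelKernel_add (t c d : ℝ) (z : ℂ) :
    hankelKernel t (c + d) z = hankelKernel t c z * Complex.exp (-(d * z)) := by
  rw [hankelKernel, hankelKernel, ← Complex.exp_add]
  push_cast
  ring_nf

theorem hankelKernel_conj (t c : ℝ) (z : ℂ) :
    hankelKernel t c (conj z) = conj (hankelKernel t c z) := by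
  simp [hankelKernel, ← Complex.exp_conj]

theorem hankelKernel_add_pi_mul_I (t c x : ℝ) :
    hankelKernel t c (x + π * I) =
      rayKernel t c x * Complex.exp (((1 - c) * π : ℝ) * I) := by
  rw [hankelKernel, Complex.exp_antiperiodic, rayKernel, Complex.ofReal_exp, ← Complex.exp_add]
  push_cast
  ring_nf

theorem norm_hankelKernel_add_pi_mul_I (t c x : ℝ) :
    ‖hankelKernel t c (x + π * I)‖ = rayKernel t c x := by
  rw [hankelKernel_add_pi_mul_I, norm_mul, Complex.norm_exp_ofReal_mul_I, mul_one,
    Complex.norm_of_nonneg (rayKernel_pos _ _ _).le]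

theorem norm_hankelKernel_sub_pi_mul_I (t c x : ℝ) :
    ‖hankelKernel t c (x - π * I)‖ = rayKernel t c x := by
  rw [← norm_hankelKernel_add_pi_mul_I, ← RCLike.norm_conj, ← hankelKernel_conj]
  simp [sub_eq_add_neg]

theorem hasDerivAt_hankelKernel (t c : ℝ) (z : ℂ) :
    HasDerivAt (hankelKernel t (c + 1)) (t * hankelKernel t c z - c * hankelKernel t (c + 1) z)
      z := by
  have hexponent : HasDerivAt (fun z : ℂ ↦ t * Complex.exp z + (1 - (c + 1 : ℝ)) * z)
      (t * Complex.exp z + (1 - (c + 1 : ℝ)) * 1) z :=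
    ((Complex.hasDerivAt_exp z).const_mul _).add ((hasDerivAt_id z).const_mul _)
  have hshift : hankelKernel t c z = hankelKernel t (c + 1) z * Complex.exp z := by
    rw [hankelKernel_add, mul_assoc, ← Complex.exp_add]
    simp
  refine hexponent.cexp.congr_deriv ?_
  rw [hshift, hankelKernel]
  push_cast
  ring

theorem hankelIntegrable_hankelKernel (ht : 0 < t) (c : ℝ) :
    HankelIntegrable (hankelKernel t c) := by
  have hcont := (differentiable_hankelKernel t c).continuous
  refine ⟨Continuous.intervalIntegrable (by fun_prop) _ _, ?_, ?_⟩
  · exact (integrableOn_rayKernel ht c).mono'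
      (Continuous.aestronglyMeasurable (by fun_prop))
      (.of_forall fun x ↦ (norm_hankelKernel_add_pi_mul_I t c x).le)
  · exact (integrableOn_rayKernel ht c).mono'
      (Continuous.aestronglyMeasurable (by fun_prop))
      (.of_forall fun x ↦ (norm_hankelKernel_sub_pi_mul_I t c x).le)

theorem hankelIntegral_hankelKernel_add_one (ht : 0 < t) (c : ℝ) :
    t * hankelIntegral (hankelKernel t c) = c * hankelIntegral (hankelKernel t (c + 1)) := by
  have hint (d : ℝ) := hankelIntegrable_hankelKernel ht d
  have hzero := hankelIntegral_deriv_eq_zero (hasDerivAt_hankelKernel t c)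
    (((hint c).const_mul t).sub ((hint (c + 1)).const_mul c))
    (squeeze_zero_norm (fun x ↦ (norm_hankelKernel_add_pi_mul_I t (c + 1) x).le)
      (tendsto_rayKernel_atTop ht (c + 1)))
    (squeeze_zero_norm (fun x ↦ (norm_hankelKernel_sub_pi_mul_I t (c + 1) x).le)
      (tendsto_rayKernel_atTop ht (c + 1)))
  rwa [((hint c).const_mul t).hankelIntegral_sub ((hint (c + 1)).const_mul c),
    hankelIntegral_const_mul, hankelIntegral_const_mul, sub_eq_zero] at hzero

theorem tendsto_hankelKernel_one (t : ℝ) :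
    Tendsto (hankelKernel t 1) (comap Complex.re atBot) (𝓝 1) := by
  have hlim := (Complex.continuous_exp.tendsto _).comp
    (Complex.tendsto_exp_comap_re_atBot.const_mul (t : ℂ))
  rw [mul_zero, Complex.exp_zero] at hlim
  exact hlim.congr fun z ↦ by simp [hankelKernel]

theorem tendsto_hankelKernel_zero (t : ℝ) (hc : c < 1) :
    Tendsto (hankelKernel t c) (comap Complex.re atBot) (𝓝 0) := by
  have hfactor : Tendsto (fun z : ℂ ↦ Complex.exp (-((c - 1 : ℝ) * z))) (comap Complex.re atBot)
      (𝓝 0) := by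
    refine Complex.tendsto_exp_comap_re_atBot.comp (tendsto_comap_iff.2 ?_)
    have hre := (tendsto_id.const_mul_atBot (sub_pos.2 hc)).comp (tendsto_comap (f := Complex.re))
    refine hre.congr fun z ↦ ?_
    rw [Function.comp_apply, Function.comp_apply, Complex.neg_re, Complex.re_ofReal_mul, ← neg_mul,
      neg_sub, id]
  have hlim := (tendsto_hankelKernel_one t).mul hfactor
  rw [mul_zero] at hlim
  refine hlim.congr fun z ↦ ?_
  rw [← hankelKernel_add, add_sub_cancel]

theorem hankelIntegral_hankelKernel_mul (ht : 0 < t) (hc : c < 1) {g : ℂ → ℂ} {C : ℝ}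
    (hg : DifferentiableOn ℂ g hankelStrip) (hC : ∀ z ∈ hankelStrip, ‖g z‖ ≤ C)
    (hconj : ∀ z, g (conj z) = conj (g z)) :
    hankelIntegral (fun z ↦ hankelKernel t c z * g z) =
      ((∫ x : ℝ, (hankelKernel t c (x + π * I) * g (x + π * I)).im / π : ℝ) : ℂ) := by
  have hdiff : DifferentiableOn ℂ (fun z ↦ hankelKernel t c z * g z) hankelStrip :=
    (differentiable_hankelKernel t c).differentiableOn.mul hg
  have hlim : Tendsto (fun z ↦ hankelKernel t c z * g z)
      (comap Complex.re atBot ⊓ 𝓟 hankelStrip) (𝓝 0) :=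
    ((tendsto_hankelKernel_zero t hc).mono_left inf_le_left).zero_mul_isBoundedUnder_le
      ⟨C, eventually_map.2 (mem_inf_of_right hC)⟩
  have hupper : Integrable fun x : ℝ ↦ hankelKernel t c (x + π * I) * g (x + π * I) := by
    refine ((integrable_rayKernel ht hc).mul_const C).mono'
      (hdiff.continuousOn.comp_continuous (by fun_prop)
        add_pi_mul_I_mem_hankelStrip).aestronglyMeasurable (.of_forall fun x ↦ ?_)
    rw [norm_mul, norm_hankelKernel_add_pi_mul_I]
    exact mul_le_mul_of_nonneg_left (hC _ (add_pi_mul_I_mem_hankelStrip x))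
      (rayKernel_pos t c x).le
  rw [hankelIntegral_eq_of_tendsto_of_conj hdiff
    ((hankelIntegrable_hankelKernel ht c).mul_bdd hg.continuousOn hC) hlim
    (fun z ↦ by rw [hankelKernel_conj, hconj, map_mul]) hupper.im, zero_add]

theorem im_hankelKernel_add_pi_mul_I (t c x : ℝ) :
    (hankelKernel t c (x + π * I)).im = sin (π * c) * rayKernel t c x := by
  rw [hankelKernel_add_pi_mul_I, Complex.im_ofReal_mul, Complex.exp_ofReal_mul_I_im,
    one_sub_mul, sin_pi_sub, mul_comm c, mul_comm]

theorem hankelIntegral_hankelKernel_of_lt_one (ht : 0 < t) (hc : c < 1) :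
    hankelIntegral (hankelKernel t c) = ((t ^ (c - 1) / Gamma c : ℝ) : ℂ) := by
  have hcollapse := hankelIntegral_hankelKernel_mul ht hc (g := fun _ ↦ 1) (C := 1)
    (differentiableOn_const 1) (by simp) (by simp)
  simp only [mul_one, im_hankelKernel_add_pi_mul_I, integral_div, integral_const_mul,
    integral_rayKernel ht hc] at hcollapse
  rw [hcollapse, div_eq_mul_inv _ (Gamma c), Gamma_inv_eq_sin_mul_Gamma_one_sub hc]
  ring_nf

theorem hankelIntegral_hankelKernel_one (ht : 0 < t) :
    hankelIntegral (hankelKernel t 1) = 1 := by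
  have him (x : ℝ) : (hankelKernel t 1 (x + π * I)).im = 0 := by
    rw [im_hankelKernel_add_pi_mul_I, mul_one, sin_pi, zero_mul]
  rw [hankelIntegral_eq_of_tendsto_of_conj (differentiable_hankelKernel t 1).differentiableOn
    (hankelIntegrable_hankelKernel ht 1) ((tendsto_hankelKernel_one t).mono_left inf_le_left)
    (hankelKernel_conj t 1) (by simp [him])]
  simp [him]

theorem hankelIntegral_hankelKernel (ht : 0 < t) (c : ℝ) :
    hankelIntegral (hankelKernel t c) = ((t ^ (c - 1) / Gamma c : ℝ) : ℂ) := by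
  obtain ⟨n, hn⟩ := exists_nat_ge c
  induction n generalizing c with
  | zero => exact hankelIntegral_hankelKernel_of_lt_one ht (by push_cast at hn; linarith)
  | succ n ih =>
    obtain hc | rfl | hc := lt_trichotomy c 1
    · exact hankelIntegral_hankelKernel_of_lt_one ht hc
    · simp [hankelIntegral_hankelKernel_one ht]
    obtain ⟨d, rfl⟩ : ∃ d, c = d + 1 := ⟨c - 1, by ring⟩
    have hd : 0 < d := by linarith
    have hrec := hankelIntegral_hankelKernel_add_one ht d
    rw [ih d (by push_cast at hn; linarith)] at hrec
    have hpow : t ^ (d + 1 - 1) = t * t ^ (d - 1) := by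
      rw [mul_comm, ← rpow_add_one ht.ne', sub_add_cancel, add_sub_cancel_right]
    apply mul_left_cancel₀ (Complex.ofReal_ne_zero.2 hd.ne')
    rw [← hrec, hpow, Gamma_add_one hd.ne']
    have := (Gamma_pos_of_pos hd).ne'
    norm_cast
    field_simp

end HankelKernel

/-- The density `K_{α,β}(s)` of the spectral representation. -/
noncomputable def spectralDensity (α β s : ℝ) : ℝ :=
  s ^ (α - β) * (sin ((β - α) * π) + s ^ α * sin (β * π)) /
    (π * (s ^ (2 * α) + 2 * s ^ α * cos (α * π) + 1))

/-- The integrand `e^{tw} w^{α-β} / (w^α + 1) dw` of the inverse Laplace transform of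
`t^{β-1} E_{α,β}(-t^α)`, pulled back by `w = e^z`. -/
noncomputable def mittagLefflerKernel (t α β : ℝ) (z : ℂ) : ℂ :=
  hankelKernel t (β - α) z * (Complex.exp (α * z) + 1)⁻¹

section MittagLeffler

variable {t α β : ℝ}

theorem norm_neg_exp_neg_mul (α : ℝ) (z : ℂ) :
    ‖-Complex.exp (-(α * z))‖ = exp (-(α * z.re)) := by
  rw [norm_neg, Complex.norm_exp, Complex.neg_re, Complex.re_ofReal_mul]

theorem hankelKernel_mul_natCast_add (t α β : ℝ) (k : ℕ) (z : ℂ) :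
    (-1) ^ k * hankelKernel t (α * k + β) z =
      hankelKernel t β z * (-Complex.exp (-(α * z))) ^ k := by
  rw [add_comm, hankelKernel_add, neg_pow (Complex.exp _), ← Complex.exp_nat_mul]
  push_cast
  ring_nf

theorem hasSum_hankelKernel (t β : ℝ) (hα : 0 < α) {z : ℂ} (hz : 0 < z.re) :
    HasSum (fun k : ℕ ↦ (-1) ^ k * hankelKernel t (α * k + β) z) (mittagLefflerKernel t α β z) := by
  have hratio : ‖-Complex.exp (-(α * z))‖ < 1 := by
    rw [norm_neg_exp_neg_mul, exp_lt_one_iff]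
    linarith [mul_pos hα hz]
  have hsum : mittagLefflerKernel t α β z =
      hankelKernel t β z * (1 - -Complex.exp (-(α * z)))⁻¹ := by
    have hsplit : 1 - -Complex.exp (-(α * z)) =
        Complex.exp (-(α * z)) * (Complex.exp (α * z) + 1) := by
      rw [mul_add, ← Complex.exp_add, neg_add_cancel, Complex.exp_zero]
      ring
    rw [mittagLefflerKernel, sub_eq_add_neg, hankelKernel_add, hsplit, mul_inv, ← Complex.exp_neg,
      mul_assoc]
    push_cast
    ring_nf
  simp only [hankelKernel_mul_natCast_add, hsum]
  exact (hasSum_geometric_of_norm_lt_one hratio).mul_left _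

theorem hasSum_hankelIntegral_hankelKernel (ht : 0 < t) (hα : 0 < α) (β : ℝ) :
    HasSum (fun k : ℕ ↦ (-1) ^ k * hankelIntegral (hankelKernel t (α * k + β)))
      (hankelIntegral (mittagLefflerKernel t α β)) := by
  simp only [← hankelIntegral_const_mul]
  refine hasSum_hankelIntegral_of_dominated (b := fun k ↦ exp (-α) ^ k)
    (fun k ↦ (hankelIntegrable_hankelKernel ht _).const_mul _)
    (hankelIntegrable_hankelKernel ht β)
    (summable_geometric_of_lt_one (exp_pos _).le (exp_lt_one_iff.2 (neg_lt_zero.2 hα)))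
    (fun k z hz ↦ ?_) (fun z hz ↦ hasSum_hankelKernel t β hα (zero_lt_one.trans_le hz))
  rw [hankelKernel_mul_natCast_add, norm_mul, norm_pow, norm_neg_exp_neg_mul, mul_comm]
  gcongr
  nlinarith

theorem cos_half_le_norm_exp_add_one (hα0 : 0 ≤ α) (hα1 : α ≤ 1) {z : ℂ} (hz : z ∈ hankelStrip) :
    cos (α * π / 2) ≤ ‖Complex.exp (α * z) + 1‖ := by
  have him : |(α * z : ℂ).im| ≤ α * π := by
    rw [Complex.im_ofReal_mul, abs_mul, abs_of_nonneg hα0]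
    exact mul_le_mul_of_nonneg_left (mem_hankelStrip.1 hz) hα0
  have hαπ : α * π ≤ π := mul_le_of_le_one_left pi_pos.le hα1
  calc cos (α * π / 2) ≤ cos |(α * z : ℂ).im / 2| := by
        refine cos_le_cos_of_nonneg_of_le_pi (abs_nonneg _) (by linarith [pi_pos]) ?_
        rw [abs_div, abs_two]
        gcongr
    _ = cos ((α * z : ℂ).im / 2) := cos_abs _
    _ ≤ ‖Complex.exp (α * z) + 1‖ := cos_half_im_le_norm_exp_add_one (him.trans hαπ)

theorem im_exp_mul_inv_mul_exp_add_one (φ θ u : ℝ) :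
    (Complex.exp (φ * I) * (u * Complex.exp (θ * I) + 1)⁻¹).im =
      (sin φ + u * sin (φ - θ)) / (u ^ 2 + 2 * u * cos θ + 1) := by
  have hnormSq : Complex.normSq (u * Complex.exp (θ * I) + 1) = u ^ 2 + 2 * u * cos θ + 1 := by
    simp only [Complex.normSq_apply, Complex.add_re, Complex.re_ofReal_mul, Complex.one_re,
      Complex.exp_ofReal_mul_I_re, Complex.add_im, Complex.im_ofReal_mul, Complex.one_im,
      Complex.exp_ofReal_mul_I_im, add_zero]
    linear_combination u ^ 2 * sin_sq_add_cos_sq θ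
  rw [Complex.mul_im, Complex.inv_re, Complex.inv_im, hnormSq, sin_sub]
  simp only [Complex.add_re, Complex.re_ofReal_mul, Complex.one_re, Complex.exp_ofReal_mul_I_re,
    Complex.add_im, Complex.im_ofReal_mul, Complex.one_im, Complex.exp_ofReal_mul_I_im, add_zero]
  ring

theorem im_mittagLefflerKernel_add_pi_mul_I (t α β x : ℝ) :
    (mittagLefflerKernel t α β (x + π * I)).im / π =
      exp x • (exp (-(exp x * t)) * spectralDensity α β (exp x)) := by
  have hpow : Complex.exp (α * (x + π * I)) =
      ((exp x ^ α : ℝ) : ℂ) * Complex.exp ((α * π : ℝ) * I) := by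
    rw [← exp_mul, Complex.ofReal_exp, ← Complex.exp_add]
    push_cast
    ring_nf
  have hsq : exp x ^ (2 * α) = (exp x ^ α) ^ 2 := by
    rw [mul_comm, rpow_mul (exp_pos x).le, rpow_two]
  have hsin : sin ((1 - (β - α)) * π) = sin ((β - α) * π) := by
    rw [one_sub_mul, sin_pi_sub]
  have hsin' : sin ((1 - (β - α)) * π - α * π) = sin (β * π) := by
    rw [← sin_pi_sub]
    ring_nf
  rw [mittagLefflerKernel, hankelKernel_add_pi_mul_I, mul_assoc, Complex.im_ofReal_mul, hpow,
    im_exp_mul_inv_mul_exp_add_one, hsin, hsin', spectralDensity, hsq, rayKernel_eq_exp_smul,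
    neg_sub, smul_eq_mul, smul_eq_mul, mul_comm t]
  simp only [div_eq_mul_inv, mul_inv]
  ring

theorem hankelIntegral_mittagLefflerKernel (ht : 0 < t) (hα0 : 0 < α) (hα1 : α < 1)
    (hβ : β < 1 + α) :
    hankelIntegral (mittagLefflerKernel t α β) =
      ((∫ s in Ioi (0 : ℝ), exp (-(s * t)) * spectralDensity α β s : ℝ) : ℂ) := by
  have hcos : 0 < cos (α * π / 2) :=
    cos_pos_of_mem_Ioo ⟨by nlinarith [pi_pos], by nlinarith [pi_pos]⟩
  have hbound {z : ℂ} (hz : z ∈ hankelStrip) := cos_half_le_norm_exp_add_one hα0.le hα1.le hz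
  rw [← integral_exp_smul_comp_exp fun s ↦ exp (-(s * t)) * spectralDensity α β s]
  simp only [← im_mittagLefflerKernel_add_pi_mul_I]
  refine hankelIntegral_hankelKernel_mul ht (by linarith) (C := (cos (α * π / 2))⁻¹) ?_ ?_ ?_
  · exact DifferentiableOn.inv (by fun_prop) fun z hz ↦ norm_pos_iff.1 (hcos.trans_le (hbound hz))
  · intro z hz
    rw [norm_inv]
    exact inv_anti₀ hcos (hbound hz)
  · intro z
    simp [← Complex.exp_conj]

end MittagLeffler

end

-- Where `αk + β` is a pole of `Γ`, Mathlib sets `Gamma (α * k + β) = 0` and the `k`-th term is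
-- `0`, which agrees with the value `0` of the entire function `1 / Γ` at the pole.
theorem mittagLeffler_spectral_representation_general (α β : ℝ) (hα0 : 0 < α) (hα1 : α < 1)
    (hβ : β < 1 + α) (t : ℝ) (ht : 0 < t) :
    t ^ (β - 1) * ∑' k : ℕ, (-t ^ α) ^ k / Real.Gamma (α * k + β) =
      ∫ s in Set.Ioi (0 : ℝ), exp (-(s * t)) * spectralDensity α β s := by
  have hsum := hasSum_hankelIntegral_hankelKernel ht hα0 β
  have hterm (k : ℕ) : (-1) ^ k * hankelIntegral (hankelKernel t (α * k + β)) =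
      ((t ^ (β - 1) * ((-t ^ α) ^ k / Gamma (α * k + β)) : ℝ) : ℂ) := by
    have hpow : t ^ (α * k + β - 1) = t ^ (β - 1) * (t ^ α) ^ k := by
      rw [← rpow_mul_natCast ht.le, ← rpow_add ht]
      ring_nf
    rw [hankelIntegral_hankelKernel ht, hpow, neg_pow (t ^ α)]
    push_cast
    ring
  simp only [hterm, hankelIntegral_mittagLefflerKernel ht hα0 hα1 hβ] at hsum
  rw [← tsum_mul_left]
  exact (Complex.hasSum_ofReal.1 hsum).tsum_eq

/-- For `0 < α < 1`, `α ≤ β ≤ 1` and `t > 0`,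
`t^{β−1} E_{α,β}(−t^α) = ∫_0^∞ e^{−st} K_{α,β}(s) ds`, where
`K_{α,β}(s) = s^{α−β}[sin((β−α)π) + s^α sin(βπ)] / (π[s^{2α} + 2 s^α cos(απ) + 1])`. -/
theorem mittagLeffler_spectral_representation (α β : ℝ) (hα0 : 0 < α) (hα1 : α < 1)
    (hαβ : α ≤ β) (hβ1 : β ≤ 1) (t : ℝ) (ht : 0 < t) :
    t ^ (β - 1) * ∑' k : ℕ, (-t ^ α) ^ k / Real.Gamma (α * k + β) =
      ∫ s in Set.Ioi (0 : ℝ),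
        Real.exp (-(s * t)) *
          (s ^ (α - β) * (Real.sin ((β - α) * π) + s ^ α * Real.sin (β * π)) /
            (π * (s ^ (2 * α) + 2 * s ^ α * Real.cos (α * π) + 1))) :=
  mittagLeffler_spectral_representation_general α β hα0 hα1 (by linarith) t ht
end

section
/- (Bochner–Minlos theorem) Let n ≥ 1 be an integer. There exists a unique probability measure P on the Borel σ-algebra of the weak-* dual S'(ℝⁿ) of the Schwartz space S(ℝⁿ) such that for every φ ∈ S(ℝⁿ), ∫_{S'(ℝⁿ)} e^{i ⟨ω,φ⟩} dP(ω) = e^{−(1/2) ‖φ‖²_{L²(ℝⁿ)}}, where ⟨ω,φ⟩ = ω(φ) is the action of the tempered distribution ω on φ and ‖φ‖²_{L²(ℝⁿ)} = ∫_{ℝⁿ} φ(x)² dx. -/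
open MeasureTheory

/-!
Uniqueness. The Schwartz space is separable and metrizable, so by Banach–Alaoglu its weak-* dual is
a countable union of compact sets. Evaluation on a countable dense set of test functions is a
continuous injection into a countable product of lines; on a σ-compact space such a map
generates the Borel σ-algebra. The law is therefore determined by its finite-dimensional
marginals, and these by their characteristic functions.

Existence. White noise is a Gaussian series `∑ gᵢ T eᵢ`, with `eᵢ` an orthonormal basis of `L²(μ)`
and `gᵢ` independent standard Gaussians; it converges in a Hilbert space as soon as `T` is
Hilbert–Schmidt. Choose weights `w`, `v` of polynomial growth with inverses in `L²`, and let
`T f = v⁻¹ · 𝓕 (w⁻¹ f μ)`: its kernel has modulus `|v(ξ)⁻¹ w(x)⁻¹|`, which is square-integrable.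
Plancherel gives `⟪T f, D φ⟫ = ⟪f, φ⟫` for the operator `D φ = v · 𝓕 (w · φ)`, which is continuous
from the Schwartz space to `L²`. The law of the series pulled back along `D` thus has covariance
`∑ ⟪eᵢ, φ⟫² = ‖φ‖²`.
-/

open Set Filter Topology TopologicalSpace

section WeakStarDual

variable {𝕜 V : Type*} [NontriviallyNormedField 𝕜] [AddCommGroup V] [Module 𝕜 V]
  [TopologicalSpace V] [IsTopologicalAddGroup V] [ContinuousSMul 𝕜 V]

lemma image_coeFn_polar_eq_range_inter {U : Set V} (hU : U ∈ 𝓝 0) :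
    (fun (ω : WeakDual 𝕜 V) v => ω v) '' WeakDual.polar 𝕜 U =
      range ((↑) : (V →ₗ[𝕜] 𝕜) → V → 𝕜) ∩ {f | ∀ v ∈ U, ‖f v‖ ≤ 1} := by
  refine Subset.antisymm ?_ ?_
  · rintro _ ⟨ω, hω, rfl⟩
    exact ⟨⟨(ω.toStrongDual : V →ₗ[𝕜] 𝕜), rfl⟩, hω⟩
  · rintro _ ⟨⟨f, rfl⟩, hf⟩
    have hbdd : Bornology.IsVonNBounded 𝕜 (f '' U) :=
      (NormedSpace.isVonNBounded_closedBall 𝕜 𝕜 1).subset <| by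
        rintro _ ⟨v, hv, rfl⟩
        simpa using hf v hv
    exact ⟨StrongDual.toWeakDual (f.clmOfExistsBoundedImage ⟨U, hU, hbdd⟩), hf, rfl⟩

variable [ProperSpace 𝕜]

theorem isCompact_polar_of_mem_nhds_zero {U : Set V} (hU : U ∈ 𝓝 0) :
    IsCompact (WeakDual.polar 𝕜 U) := by
  have hind : IsInducing (fun (ω : WeakDual 𝕜 V) v => ω v) := ⟨rfl⟩
  rw [hind.isCompact_iff, image_coeFn_polar_eq_range_inter hU]
  have hbdd (v : V) : ∃ r : ℝ, ∀ f ∈ range ((↑) : (V →ₗ[𝕜] 𝕜) → V → 𝕜) ∩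
      {f | ∀ v ∈ U, ‖f v‖ ≤ 1}, f v ∈ Metric.closedBall (0 : 𝕜) r := by
    obtain ⟨r, -, hr⟩ := (absorbent_nhds_zero (𝕜 := 𝕜) hU v).exists_pos
    obtain ⟨c, hc⟩ := NormedField.exists_lt_norm 𝕜 r
    refine ⟨‖c‖, ?_⟩
    rintro _ ⟨⟨f, rfl⟩, hf⟩
    obtain ⟨u, hu, rfl⟩ := hr c hc.le (mem_singleton v)
    simpa using mul_le_mul_of_nonneg_left (hf u hu) (norm_nonneg c)
  choose r hr using hbdd
  refine (isCompact_univ_pi fun v => isCompact_closedBall (0 : 𝕜) (r v)).of_isClosed_subset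
    ((LinearMap.isClosed_range_coe V 𝕜 (RingHom.id 𝕜)).inter ?_) fun f hf v _ => hr v f hf
  simp only [ofPred_forall]
  exact isClosed_biInter fun v _ => isClosed_le (by fun_prop) continuous_const

variable (𝕜 V) in
theorem sigmaCompactSpace_weakDual [FirstCountableTopology V] :
    SigmaCompactSpace (WeakDual 𝕜 V) := by
  obtain ⟨U, hU⟩ := (𝓝 (0 : V)).exists_antitone_basis
  refine ⟨fun n => WeakDual.polar 𝕜 (U n),
    fun n => isCompact_polar_of_mem_nhds_zero (hU.mem n), eq_univ_of_forall fun ω => ?_⟩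
  have hω : {v : V | ‖ω v‖ ≤ 1} ∈ 𝓝 0 := by
    have : Tendsto (fun v : V => ‖ω v‖) (𝓝 0) (𝓝 ‖ω 0‖) :=
      (ω.toStrongDual.continuous.norm).tendsto 0
    exact this.eventually_le_const (by simp)
  obtain ⟨n, hn⟩ := hU.mem_iff.1 hω
  exact mem_iUnion.2 ⟨n, fun v hv => hn hv⟩

end WeakStarDual

section Uniqueness

theorem borel_le_comap_borel_of_continuous_injective {X Y : Type*} [TopologicalSpace X]
    [SigmaCompactSpace X] [TopologicalSpace Y] [T2Space Y] {j : X → Y} (hj : Continuous j)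
    (hinj : Function.Injective j) : borel X ≤ (borel Y).comap j := by
  rw [borel_eq_generateFrom_isClosed]
  refine MeasurableSpace.generateFrom_le fun F hF => ?_
  have hcover : ⋃ n, j '' (F ∩ compactCovering X n) = j '' F := by
    rw [← image_iUnion, ← inter_iUnion, iUnion_compactCovering, inter_univ]
  refine ⟨j '' F, ?_, hinj.preimage_image F⟩
  borelize Y
  rw [← hcover]
  exact MeasurableSet.iUnion fun n =>
    (((isCompact_compactCovering X n).inter_left hF).image hj).isClosed.measurableSet

theorem ext_of_integral_exp_I_mul_sum {ι : Type*} {P Q : Measure (ι → ℝ)} [IsFiniteMeasure P]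
    [IsFiniteMeasure Q]
    (h : ∀ (s : Finset ι) (t : s → ℝ),
      ∫ x, Complex.exp (Complex.I * ↑(∑ i, t i * x i)) ∂P =
        ∫ x, Complex.exp (Complex.I * ↑(∑ i, t i * x i)) ∂Q) : P = Q := by
  refine IsProjectiveLimit.unique (P := fun s => P.map s.restrict) (fun _ => rfl) fun s => ?_
  have hr : Measurable (s.restrict (π := fun _ : ι => ℝ)) := s.measurable_restrict
  refine Measure.ext_of_charFunDual (funext fun L => ?_)
  classical
  have hL (x : ι → ℝ) : L (s.restrict x) = ∑ i, L (fun j => if i = j then 1 else 0) * x i := by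
    simpa [mul_comm] using LinearMap.pi_apply_eq_sum_univ L.toLinearMap (s.restrict x)
  simp_rw [charFunDual_apply, integral_map hr.aemeasurable
    (f := fun v => Complex.exp (L v * Complex.I)) (by fun_prop), hL, mul_comm _ Complex.I]
  exact (h s _).symm

theorem ext_of_charFun_weakDual {V : Type*} [AddCommGroup V] [Module ℝ V] [TopologicalSpace V]
    [IsTopologicalAddGroup V] [ContinuousSMul ℝ V] [FirstCountableTopology V] [SeparableSpace V]
    [MeasurableSpace (WeakDual ℝ V)] [BorelSpace (WeakDual ℝ V)]
    {P Q : Measure (WeakDual ℝ V)} [IsFiniteMeasure P] [IsFiniteMeasure Q]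
    (h : ∀ v : V, ∫ ω : WeakDual ℝ V, Complex.exp (Complex.I * ω v) ∂P =
      ∫ ω : WeakDual ℝ V, Complex.exp (Complex.I * ω v) ∂Q) : P = Q := by
  obtain ⟨C, hC, hdense⟩ := exists_countable_dense V
  have := hC.to_subtype
  have := sigmaCompactSpace_weakDual ℝ V
  let j : WeakDual ℝ V → C → ℝ := fun ω v => ω v
  have hj : Continuous j := continuous_pi fun v => WeakDual.eval_continuous v.1
  have hinj : Function.Injective j := fun ω η hωη => DFunLike.coe_injective <|
    ω.toStrongDual.continuous.ext_on hdense η.toStrongDual.continuous fun v hv =>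
      congrFun hωη ⟨v, hv⟩
  have hmap : P.map j = Q.map j := by
    refine ext_of_integral_exp_I_mul_sum fun s t => ?_
    have hsum (ω : WeakDual ℝ V) : ∑ i, t i * j ω i = ω (∑ i : s, t i • (i : V)) := by
      simp [j, map_sum]
    have hexp : Measurable fun x : C → ℝ => Complex.exp (Complex.I * ↑(∑ i, t i * x i)) := by
      fun_prop
    rw [integral_map hj.measurable.aemeasurable hexp.aestronglyMeasurable,
      integral_map hj.measurable.aemeasurable hexp.aestronglyMeasurable]
    simpa only [hsum] using h _
  refine Measure.ext fun S hS => ?_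
  have hS' : MeasurableSet[(borel (C → ℝ)).comap j] S :=
    borel_le_comap_borel_of_continuous_injective hj hinj S
      (BorelSpace.measurable_eq (α := WeakDual ℝ V) ▸ hS)
  rw [← BorelSpace.measurable_eq] at hS'
  obtain ⟨B, hB, rfl⟩ := hS'
  rw [← Measure.map_apply hj.measurable hB, ← Measure.map_apply hj.measurable hB, hmap]

end Uniqueness

theorem secondCountableTopology_of_withSeminorms {𝕜 V ι : Type*} [NormedField 𝕜] [AddCommGroup V]
    [Module 𝕜 V] [TopologicalSpace V] [Countable ι] {p : SeminormFamily 𝕜 V ι}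
    (hp : WithSeminorms p) {G : ι → Type*} [∀ i, SeminormedAddCommGroup (G i)]
    [∀ i, NormedSpace 𝕜 (G i)] [∀ i, SecondCountableTopology (G i)] (Φ : ∀ i, V →ₗ[𝕜] G i)
    (hΦ : ∀ i v, ‖Φ i v‖ = p i v) : SecondCountableTopology V := by
  have := hp.topologicalAddGroup
  have hind : IsInducing (LinearMap.pi Φ) := by
    rw [IsTopologicalAddGroup.isInducing_iff_nhds_zero, nhds_pi, Filter.pi, comap_iInf,
      p.withSeminorms_iff_nhds_eq_iInf.1 hp]
    refine iInf_congr fun i => ?_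
    rw [Pi.zero_apply, comap_comap, ← comap_norm_nhds_zero (E := G i), comap_comap]
    exact congrArg (comap · (𝓝 0)) (funext fun v => (hΦ i v).symm)
  exact hind.secondCountableTopology

theorem secondCountableTopology_onePoint (E : Type*) [AddCommGroup E] [Module ℝ E]
    [FiniteDimensional ℝ E] [TopologicalSpace E] [IsTopologicalAddGroup E] [ContinuousSMul ℝ E]
    [T2Space E] : SecondCountableTopology (OnePoint E) :=
  (onePointEquivSphereOfFinrankEq (ι := Fin (Module.finrank ℝ E + 1)) (V := E)
    (by simp)).secondCountableTopology

section Schwartz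

open scoped SchwartzMap ContDiff

variable {E F : Type*} [NormedAddCommGroup E] [NormedSpace ℝ E] [FiniteDimensional ℝ E]
  [NormedAddCommGroup F] [NormedSpace ℝ F]

lemma tendsto_pow_smul_iteratedFDeriv_cocompact (k l : ℕ) (φ : 𝓢(E, F)) :
    Tendsto (fun x => ‖x‖ ^ k • iteratedFDeriv ℝ l φ x) (cocompact E) (𝓝 0) := by
  have hlim : Tendsto (fun x : E => SchwartzMap.seminorm ℝ (k + 1) l φ / ‖x‖) (cocompact E) (𝓝 0) :=
    tendsto_norm_cocompact_atTop.const_div_atTop _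
  refine squeeze_zero_norm' ?_ hlim
  filter_upwards [(tendsto_norm_cocompact_atTop (E := E)).eventually_gt_atTop 0] with x hx
  rw [le_div_iff₀ hx, norm_smul, norm_pow, norm_norm]
  calc _ = ‖x‖ ^ (k + 1) * ‖iteratedFDeriv ℝ l φ x‖ := by ring
    _ ≤ _ := φ.le_seminorm ℝ (k + 1) l x

/-- The function `‖x‖ ^ k • D^l φ x`, extended by `0` to the one-point compactification of `E`. It
turns the Schwartz seminorm of index `(k, l)` into a norm on a separable space of continuous
functions. -/
noncomputable def onePointDeriv (k l : ℕ) : 𝓢(E, F) →ₗ[ℝ] C(OnePoint E, E [×l]→L[ℝ] F) where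
  toFun φ := OnePoint.continuousMapMk
    ⟨fun x => ‖x‖ ^ k • iteratedFDeriv ℝ l φ x, (continuous_norm.pow k).smul
      ((φ.smooth ⊤).continuous_iteratedFDeriv (by exact_mod_cast le_top))⟩ 0 <| by
    rw [coclosedCompact_eq_cocompact]
    exact tendsto_pow_smul_iteratedFDeriv_cocompact k l φ
  map_add' φ ψ := by
    ext1 x
    cases x with
    | infty => simp [OnePoint.continuousMapMk]
    | coe x =>
      change ‖x‖ ^ k • iteratedFDeriv ℝ l (⇑φ + ⇑ψ) x =
        ‖x‖ ^ k • iteratedFDeriv ℝ l φ x + ‖x‖ ^ k • iteratedFDeriv ℝ l ψ x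
      rw [iteratedFDeriv_add_apply (φ.smooth _).contDiffAt (ψ.smooth _).contDiffAt, smul_add]
  map_smul' c φ := by
    ext1 x
    cases x with
    | infty => simp [OnePoint.continuousMapMk]
    | coe x =>
      change ‖x‖ ^ k • iteratedFDeriv ℝ l (c • ⇑φ) x = c • ‖x‖ ^ k • iteratedFDeriv ℝ l φ x
      rw [iteratedFDeriv_const_smul_apply (φ.smooth _).contDiffAt, smul_comm]

lemma norm_onePointDeriv (k l : ℕ) (φ : 𝓢(E, F)) :
    ‖onePointDeriv k l φ‖ = SchwartzMap.seminorm ℝ k l φ := by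
  have hcoe (x : E) : ‖onePointDeriv k l φ x‖ = ‖x‖ ^ k * ‖iteratedFDeriv ℝ l φ x‖ := by
    change ‖‖x‖ ^ k • iteratedFDeriv ℝ l φ x‖ = _
    rw [norm_smul, norm_pow, norm_norm]
  refine le_antisymm ((ContinuousMap.norm_le _ (apply_nonneg _ _)).2 fun x => ?_)
    (φ.seminorm_le_bound ℝ k l (by positivity) fun x => ?_)
  · cases x with
    | infty => simp [onePointDeriv, OnePoint.continuousMapMk]
    | coe x => exact (hcoe x).trans_le (φ.le_seminorm ℝ k l x)
  · exact (hcoe x).symm.trans_le ((onePointDeriv k l φ).norm_coe_le_norm x)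

theorem secondCountableTopology_schwartzMap [FiniteDimensional ℝ F] :
    SecondCountableTopology 𝓢(E, F) := by
  have := secondCountableTopology_onePoint E
  have (l : ℕ) : FiniteDimensional ℝ (E [×l]→L[ℝ] F) :=
    FiniteDimensional.of_injective ContinuousMultilinearMap.toMultilinearMapLinear
      ContinuousMultilinearMap.toMultilinearMap_injective
  have (l : ℕ) : ProperSpace (E [×l]→L[ℝ] F) := FiniteDimensional.proper ℝ _
  let Φ (m : ℕ × ℕ) : 𝓢(E, F) →ₗ[ℝ] C(OnePoint E, E [×m.2]→L[ℝ] F) := onePointDeriv m.1 m.2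
  have hΦ (m : ℕ × ℕ) (φ : 𝓢(E, F)) : ‖Φ m φ‖ = schwartzSeminormFamily ℝ E F m φ :=
    norm_onePointDeriv m.1 m.2 φ
  exact secondCountableTopology_of_withSeminorms
    (G := fun m => C(OnePoint E, E [×m.2]→L[ℝ] F)) (schwartz_withSeminorms ℝ E F) Φ hΦ

end Schwartz

section GaussianSeries

open ProbabilityTheory
open scoped RealInnerProductSpace ENNReal

variable {Ω ι H : Type*} [MeasurableSpace Ω] {P : Measure Ω}
  [NormedAddCommGroup H] [InnerProductSpace ℝ H]

theorem summable_of_pairwise_inner_eq_zero [CompleteSpace H] {v : ι → H}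
    (hv : Pairwise fun i j => ⟪v i, v j⟫ = 0) (hsum : Summable fun i => ‖v i‖ ^ 2) :
    Summable v := by
  have horth : OrthogonalFamily ℝ (fun i => ℝ ∙ v i) fun i => (ℝ ∙ v i).subtypeₗᵢ :=
    .of_pairwise fun i j hij => by
      change (ℝ ∙ v i) ⟂ (ℝ ∙ v j)
      simpa [Submodule.isOrtho_span] using hv hij
  exact (horth.summable_iff_norm_sq_summable fun i =>
    ⟨v i, Submodule.mem_span_singleton_self _⟩).2 hsum

lemma inner_toLp_smul {X Y : Ω → ℝ} {g k : H} (hX : MemLp (fun ω => X ω • g) 2 P)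
    (hY : MemLp (fun ω => Y ω • k) 2 P) :
    ⟪hX.toLp, hY.toLp⟫ = (∫ ω, X ω * Y ω ∂P) * ⟪g, k⟫ := by
  rw [L2.inner_def, ← integral_mul_const]
  refine integral_congr_ae ?_
  filter_upwards [hX.coeFn_toLp, hY.coeFn_toLp] with ω hω hω'
  rw [hω, hω', real_inner_smul_left, real_inner_smul_right]
  ring

variable {X : Ω → ℝ}

lemma memLp_smul_of_hasLaw_gaussianReal (hX : HasLaw X (gaussianReal 0 1) P) (g : H) :
    MemLp (fun ω => X ω • g) 2 P := by
  have hX2 : MemLp X 2 P :=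
    (memLp_map_measure_iff (g := id) (by fun_prop) hX.aemeasurable).1
      (hX.map_eq ▸ memLp_id_gaussianReal 2)
  exact (ContinuousLinearMap.toSpanSingleton ℝ g).comp_memLp' hX2

lemma integral_eq_zero_of_hasLaw_gaussianReal (hX : HasLaw X (gaussianReal 0 1) P) :
    ∫ ω, X ω ∂P = 0 :=
  hX.integral_eq.trans integral_id_gaussianReal

lemma integral_mul_self_of_hasLaw_gaussianReal (hX : HasLaw X (gaussianReal 0 1) P) :
    ∫ ω, X ω * X ω ∂P = 1 := by
  have hvar := hX.variance_eq
  rw [variance_id_gaussianReal, variance_of_integral_eq_zero hX.aemeasurable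
    (integral_eq_zero_of_hasLaw_gaussianReal hX)] at hvar
  simpa [sq] using hvar

variable {ξ : ι → Ω → ℝ}

theorem summable_toLp_smul_gaussian [CompleteSpace H] (hξ : ∀ i, HasLaw (ξ i) (gaussianReal 0 1) P)
    (hind : iIndepFun ξ P) {g : ι → H} (hg : Summable fun i => ‖g i‖ ^ 2) :
    Summable fun i => (memLp_smul_of_hasLaw_gaussianReal (hξ i) (g i)).toLp := by
  refine summable_of_pairwise_inner_eq_zero (fun i j hij => ?_) ?_
  · beta_reduce
    rw [inner_toLp_smul, (hind.indepFun hij).integral_fun_mul_eq_mul_integral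
      (hξ i).aemeasurable.aestronglyMeasurable (hξ j).aemeasurable.aestronglyMeasurable,
      integral_eq_zero_of_hasLaw_gaussianReal (hξ i), zero_mul, zero_mul]
  · refine hg.congr fun i => ?_
    rw [← real_inner_self_eq_norm_sq, ← real_inner_self_eq_norm_sq, inner_toLp_smul,
      integral_mul_self_of_hasLaw_gaussianReal (hξ i), one_mul]

theorem integral_cexp_sum_gaussian (hξ : ∀ i, HasLaw (ξ i) (gaussianReal 0 1) P)
    (hind : iIndepFun ξ P) (c : ι → ℝ) (s : Finset ι) :
    ∫ ω, Complex.exp ((∑ i ∈ s, c i * ξ i ω : ℝ) * Complex.I) ∂P =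
      Complex.exp (-((∑ i ∈ s, c i ^ 2 : ℝ) / 2 : ℂ)) := by
  have hm (i : ι) : AEMeasurable (fun ω => c i * ξ i ω) P := (hξ i).aemeasurable.const_mul _
  have hcind : iIndepFun (fun i ω => c i * ξ i ω) P := hind.comp (fun i x => c i * x) (by fun_prop)
  have hchar (i : ι) :
      charFun (P.map fun ω => c i * ξ i ω) 1 = Complex.exp (-(c i ^ 2 / 2 : ℂ)) := by
    rw [charFun_map_mul_comp (hξ i).aemeasurable, (hξ i).map_eq, charFun_gaussianReal]
    simp
  calc _ = charFun (P.map fun ω => ∑ i ∈ s, c i * ξ i ω) 1 := by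
        rw [charFun_apply_real, integral_map (by fun_prop) (by fun_prop)]
        simp
    _ = ∏ i ∈ s, Complex.exp (-(c i ^ 2 / 2 : ℂ)) := by
        rw [(hcind.restrict s).charFun_map_fun_finsetSum_eq_prod fun i _ => hm i,
          Finset.prod_apply]
        exact Finset.prod_congr rfl fun i _ => hchar i
    _ = _ := by
        rw [← Complex.exp_sum, Finset.sum_neg_distrib, ← Finset.sum_div]
        push_cast
        rfl

variable [MeasurableSpace H] [BorelSpace H]

theorem charFun_map_apply {X : Ω → H} (hX : AEStronglyMeasurable X P) (h : H) :
    charFun (P.map X) h = ∫ ω, Complex.exp (⟪X ω, h⟫ * Complex.I) ∂P := by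
  rw [charFun_apply, integral_map hX.aemeasurable]
  exact Continuous.aestronglyMeasurable (by fun_prop)

theorem norm_charFun_map_sub_le [IsFiniteMeasure P] {X Y : Ω → H} (hX : Integrable X P)
    (hY : Integrable Y P) (h : H) :
    ‖charFun (P.map X) h - charFun (P.map Y) h‖ ≤ ‖h‖ * ∫ ω, ‖X ω - Y ω‖ ∂P := by
  have hint {Z : Ω → H} (hZ : Integrable Z P) :
      Integrable (fun ω => Complex.exp (⟪Z ω, h⟫ * Complex.I)) P := by
    refine .of_bound (C := 1) ?_ (.of_forall fun ω => (Complex.norm_exp_ofReal_mul_I _).le)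
    exact (by fun_prop : Continuous fun x : H => Complex.exp (⟪x, h⟫ * Complex.I)
      ).comp_aestronglyMeasurable hZ.1
  rw [charFun_map_apply hX.1, charFun_map_apply hY.1, ← integral_sub (hint hX) (hint hY),
    ← integral_const_mul]
  refine norm_integral_le_of_norm_le ((hX.sub hY).norm.const_mul _) (.of_forall fun ω => ?_)
  have hfactor : Complex.exp (⟪X ω, h⟫ * Complex.I) - Complex.exp (⟪Y ω, h⟫ * Complex.I) =
      Complex.exp (⟪Y ω, h⟫ * Complex.I) * (Complex.exp (Complex.I * ⟪X ω - Y ω, h⟫) - 1) := by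
    rw [mul_sub, mul_one, ← Complex.exp_add, inner_sub_left]
    push_cast
    ring_nf
  calc _ = ‖Complex.exp (Complex.I * ⟪X ω - Y ω, h⟫) - 1‖ := by
        rw [hfactor, norm_mul, Complex.norm_exp_ofReal_mul_I, one_mul]
    _ ≤ ‖⟪X ω - Y ω, h⟫‖ := Real.norm_exp_I_mul_ofReal_sub_one_le
    _ ≤ ‖h‖ * ‖X ω - Y ω‖ := (norm_inner_le_norm _ _).trans_eq (mul_comm _ _)

theorem continuous_charFun_map_Lp [IsProbabilityMeasure P] {p : ℝ≥0∞} [Fact (1 ≤ p)] (h : H) :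
    Continuous fun X : Lp H p P => charFun (P.map X) h := by
  have hint (X : Lp H p P) : Integrable X P := (Lp.memLp X).integrable Fact.out
  refine (LipschitzWith.of_dist_le_mul (K := ‖h‖₊) fun X Y => ?_).continuous
  rw [dist_eq_norm, dist_eq_norm]
  refine (norm_charFun_map_sub_le (hint X) (hint Y) h).trans
    (mul_le_mul_of_nonneg_left ?_ (norm_nonneg h))
  calc ∫ ω, ‖X ω - Y ω‖ ∂P = ∫ ω, ‖(X - Y) ω‖ ∂P := integral_congr_ae <| by
        filter_upwards [Lp.coeFn_sub X Y] with ω hω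
        rw [hω, Pi.sub_apply]
    _ = (eLpNorm (X - Y) 1 P).toReal := by
        rw [integral_norm_eq_lintegral_enorm (hint _).1, eLpNorm_one_eq_lintegral_enorm]
    _ ≤ ‖X - Y‖ := by
        rw [Lp.norm_def]
        exact ENNReal.toReal_mono (Lp.eLpNorm_ne_top _)
          (eLpNorm_le_eLpNorm_of_exponent_le Fact.out (hint _).1)

theorem charFun_map_sum_gaussian (hξ : ∀ i, HasLaw (ξ i) (gaussianReal 0 1) P)
    (hind : iIndepFun ξ P) (g : ι → H) (s : Finset ι) (h : H) :
    charFun (P.map ⇑(∑ i ∈ s, (memLp_smul_of_hasLaw_gaussianReal (hξ i) (g i)).toLp)) h =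
      Complex.exp (-((∑ i ∈ s, ⟪g i, h⟫ ^ 2 : ℝ) / 2 : ℂ)) := by
  rw [← integral_cexp_sum_gaussian hξ hind, charFun_map_apply (Lp.aestronglyMeasurable _)]
  refine integral_congr_ae ?_
  have hterm : ∀ᵐ ω ∂P, ∀ i ∈ s,
      (memLp_smul_of_hasLaw_gaussianReal (hξ i) (g i)).toLp _ ω = ξ i ω • g i :=
    (Finset.eventually_all s).2 fun i _ => MemLp.coeFn_toLp _
  filter_upwards [hterm, Lp.coeFn_finsetSum s
    fun i => (memLp_smul_of_hasLaw_gaussianReal (hξ i) (g i)).toLp] with ω hω hsum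
  rw [hsum, Finset.sum_apply, Finset.sum_congr rfl hω, sum_inner]
  simp only [real_inner_smul_left, mul_comm]

theorem exists_charFun_eq_of_summable_norm_sq [CompleteSpace H] {g : ι → H}
    (hg : Summable fun i => ‖g i‖ ^ 2) :
    ∃ ν : Measure H, IsProbabilityMeasure ν ∧ ∀ (h : H) (σ : ℝ),
      HasSum (fun i => ⟪g i, h⟫ ^ 2) σ → charFun ν h = Complex.exp (-(σ / 2 : ℂ)) := by
  obtain ⟨Ω, _, P, ξ, -, hξ, hind, _⟩ := exists_iid ι (gaussianReal 0 1)
  obtain ⟨X, hX⟩ := summable_toLp_smul_gaussian hξ hind hg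
  refine ⟨P.map X, Measure.isProbabilityMeasure_map (Lp.aestronglyMeasurable X).aemeasurable,
    fun h σ hσ => tendsto_nhds_unique (((continuous_charFun_map_Lp h).tendsto X).comp hX) ?_⟩
  refine Tendsto.congr (fun s => (charFun_map_sum_gaussian hξ hind g s h).symm) ?_
  exact ((by fun_prop : Continuous fun t : ℝ => Complex.exp (-(t / 2 : ℂ))).tendsto σ).comp hσ

end GaussianSeries

section HilbertSchmidt

open scoped RealInnerProductSpace

variable {ι X K G : Type*} [NormedAddCommGroup K] [InnerProductSpace ℝ K] [CompleteSpace K]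
  [NormedAddCommGroup G] [InnerProductSpace ℝ G] [MeasurableSpace X] {ν : Measure X}

lemma norm_toLp_two_sq {f : X → G} (hf : MemLp f 2 ν) : ‖hf.toLp‖ ^ 2 = ∫ x, ‖f x‖ ^ 2 ∂ν := by
  rw [← real_inner_self_eq_norm_sq, L2.inner_def]
  refine integral_congr_ae ?_
  filter_upwards [hf.coeFn_toLp] with x hx
  rw [hx, real_inner_self_eq_norm_sq]

variable [FiniteDimensional ℝ G]

theorem sum_norm_map_sq_le (L : K →L[ℝ] G) {e : ι → K} (he : Orthonormal ℝ e) (s : Finset ι) :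
    ∑ i ∈ s, ‖L (e i)‖ ^ 2 ≤ Module.finrank ℝ G * ‖L‖ ^ 2 := by
  have := FiniteDimensional.complete ℝ G
  let b := stdOrthonormalBasis ℝ G
  have hparseval (i : ι) : ‖L (e i)‖ ^ 2 = ∑ j, ‖⟪e i, L.adjoint (b j)⟫‖ ^ 2 := by
    rw [← b.sum_sq_norm_inner_left]
    simp only [ContinuousLinearMap.adjoint_inner_right]
  calc ∑ i ∈ s, ‖L (e i)‖ ^ 2 = ∑ j, ∑ i ∈ s, ‖⟪e i, L.adjoint (b j)⟫‖ ^ 2 := by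
        rw [Finset.sum_comm]
        exact Finset.sum_congr rfl fun i _ => hparseval i
    _ ≤ ∑ _j : Fin (Module.finrank ℝ G), ‖L‖ ^ 2 := Finset.sum_le_sum fun j _ => by
        refine (he.sum_inner_products_le _).trans (pow_le_pow_left₀ (norm_nonneg _) ?_ 2)
        simpa using L.adjoint.le_opNorm (b j)
    _ = _ := by simp

theorem summable_norm_toLp_map_sq {L : X → K →L[ℝ] G} (hL : ∀ f, MemLp (fun x => L x f) 2 ν)
    {κ : X → ℝ} (hκ : MemLp κ 2 ν) (hLκ : ∀ x, ‖L x‖ ≤ κ x) {e : ι → K} (he : Orthonormal ℝ e) :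
    Summable fun i => ‖(hL (e i)).toLp‖ ^ 2 := by
  have hint (f : K) : Integrable (fun x => ‖L x f‖ ^ 2) ν := (hL f).norm.integrable_sq
  refine summable_of_sum_le (c := ∫ x, Module.finrank ℝ G * κ x ^ 2 ∂ν)
    (fun i => sq_nonneg _) fun s => ?_
  simp_rw [norm_toLp_two_sq]
  rw [← integral_finsetSum _ fun i _ => hint (e i)]
  refine integral_mono (integrable_finsetSum _ fun i _ => hint (e i))
    (hκ.integrable_sq.const_mul _) fun x => (sum_norm_map_sq_le (L x) he s).trans ?_
  gcongr
  exact hLκ x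

end HilbertSchmidt

section Minlos

open scoped RealInnerProductSpace

variable {ι V H K : Type*} [AddCommGroup V] [Module ℝ V] [TopologicalSpace V]
  [NormedAddCommGroup H] [InnerProductSpace ℝ H] [CompleteSpace H]
  [NormedAddCommGroup K] [InnerProductSpace ℝ K]
  [MeasurableSpace (WeakDual ℝ V)] [BorelSpace (WeakDual ℝ V)]

theorem exists_gaussian_weakDual (D : V →L[ℝ] H) (A : V → K) (e : HilbertBasis ι ℝ K) {T : K → H}
    (hT : Summable fun i => ‖T (e i)‖ ^ 2) (hTD : ∀ f φ, ⟪T f, D φ⟫ = ⟪f, A φ⟫) :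
    ∃ P : ProbabilityMeasure (WeakDual ℝ V), ∀ φ : V,
      ∫ ω : WeakDual ℝ V, Complex.exp (Complex.I * ω φ) ∂(P : Measure (WeakDual ℝ V)) =
        Complex.exp (-(1 / 2 : ℂ) * (‖A φ‖ ^ 2 : ℝ)) := by
  borelize H
  obtain ⟨ν, _, hν⟩ := exists_charFun_eq_of_summable_norm_sq hT
  let R : H → WeakDual ℝ V := fun h => StrongDual.toWeakDual (innerSL ℝ h ∘L D)
  have hR : Continuous R := WeakDual.continuous_of_continuous_eval fun φ =>
    (by fun_prop : Continuous fun h => ⟪h, D φ⟫)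
  refine ⟨⟨ν.map R, Measure.isProbabilityMeasure_map hR.aemeasurable⟩, fun φ => ?_⟩
  have hexp : Continuous fun ω : WeakDual ℝ V => Complex.exp (Complex.I * ω φ) :=
    (by fun_prop : Continuous fun t : ℝ => Complex.exp (Complex.I * t)).comp
      (WeakDual.eval_continuous φ)
  have hparseval : HasSum (fun i => ⟪T (e i), D φ⟫ ^ 2) (‖A φ‖ ^ 2) := by
    simpa only [hTD, real_inner_comm (A φ), ← sq, real_inner_self_eq_norm_sq]
      using e.hasSum_inner_mul_inner (A φ) (A φ)
  calc _ = ∫ h, Complex.exp (Complex.I * ⟪h, D φ⟫) ∂ν :=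
        integral_map hR.aemeasurable hexp.measurable.aestronglyMeasurable
    _ = charFun ν (D φ) := by simp only [charFun_apply, mul_comm]
    _ = Complex.exp (-((‖A φ‖ ^ 2 : ℝ) / 2 : ℂ)) := hν _ _ hparseval
    _ = _ := by rw [neg_mul, one_div_mul_eq_div]

end Minlos

section WeightedFourier

open scoped SchwartzMap FourierTransform InnerProductSpace

theorem sigmaFinite_of_memLp_of_ne_zero {X F : Type*} [MeasurableSpace X] {ν : Measure X}
    [NormedAddCommGroup F] {f : X → F} {p : ENNReal} (hf : MemLp f p ν) (hfm : StronglyMeasurable f)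
    (hp0 : p ≠ 0) (hp : p ≠ ⊤) (hf0 : ∀ x, f x ≠ 0) : SigmaFinite ν := by
  obtain ⟨t, -, ht, hν⟩ :=
    (hf.finStronglyMeasurable_of_stronglyMeasurable hfm hp0 hp).exists_set_sigmaFinite
  have htop : t = univ := compl_empty_iff.1 (eq_empty_of_forall_notMem fun x hx => hf0 x (ht x hx))
  rwa [htop, Measure.restrict_univ] at hν

theorem real_inner_L2_eq_re_inner {X : Type*} [MeasurableSpace X] {ν : Measure X}
    (f g : Lp ℂ 2 ν) : ⟪f, g⟫_ℝ = (⟪f, g⟫_ℂ).re := by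
  rw [L2.inner_def, L2.inner_def]
  exact integral_re (L2.integrable_inner (𝕜 := ℂ) f g)

variable {E : Type*} [NormedAddCommGroup E] [MeasurableSpace E]

/-- A nowhere vanishing weight of temperate growth whose inverse is square-integrable with respect
to `μ`. Multiplication by `w` preserves the Schwartz space, and dividing by `w` maps `L²(μ)` into
`L¹(μ)`. -/
structure IsTemperateWeight [NormedSpace ℝ E] (w : E → ℝ) (μ : Measure E) : Prop where
  hasTemperateGrowth : w.HasTemperateGrowth
  ne_zero (x : E) : w x ≠ 0
  memLp_inv : MemLp (fun x => (w x)⁻¹) 2 μ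

theorem exists_isTemperateWeight [InnerProductSpace ℝ E] [BorelSpace E] (μ : Measure E)
    [hμ : μ.HasTemperateGrowth] : ∃ w : E → ℝ, IsTemperateWeight w μ := by
  obtain ⟨k, hk⟩ := hμ.exists_eLpNorm_lt_top 2
  have hpos (x : E) : 0 < (1 + ‖x‖ ^ 2) ^ (k : ℝ) := by positivity
  have hcont : Continuous fun x : E => ((1 + ‖x‖ ^ 2) ^ (k : ℝ))⁻¹ :=
    (Continuous.rpow_const (by fun_prop) fun x => .inr (by positivity)).inv₀ fun x => (hpos x).ne'
  have hcont' : Continuous fun x : E => (1 + ‖x‖) ^ (-k : ℝ) :=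
    Continuous.rpow_const (by fun_prop) fun x => .inl (by positivity)
  have hk' : MemLp (fun x : E => (1 + ‖x‖) ^ (-k : ℝ)) 2 μ := ⟨hcont'.aestronglyMeasurable, hk⟩
  refine ⟨fun x => (1 + ‖x‖ ^ 2) ^ (k : ℝ), Function.hasTemperateGrowth_one_add_norm_sq_rpow E k,
    fun x => (hpos x).ne', hk'.of_le_mul (c := 2 ^ k) hcont.aestronglyMeasurable
    (.of_forall fun x => ?_)⟩
  rw [Real.norm_of_nonneg (by positivity), Real.norm_of_nonneg (by positivity),
    Real.rpow_neg (by positivity), Real.rpow_natCast, Real.rpow_natCast,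
    inv_le_iff_one_le_mul₀ (by positivity)]
  have hle : 1 + ‖x‖ ≤ 2 * (1 + ‖x‖ ^ 2) := by nlinarith [sq_nonneg (‖x‖ - 1)]
  calc 1 = ((1 + ‖x‖) ^ k)⁻¹ * (1 + ‖x‖) ^ k := (inv_mul_cancel₀ (by positivity)).symm
    _ ≤ ((1 + ‖x‖) ^ k)⁻¹ * (2 * (1 + ‖x‖ ^ 2)) ^ k := by gcongr
    _ = _ := by rw [mul_pow]; ring

namespace IsTemperateWeight

section NormedSpace

variable [NormedSpace ℝ E] {w : E → ℝ} {μ : Measure E}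

theorem continuous_inv (hw : IsTemperateWeight w μ) : Continuous fun x => (w x)⁻¹ :=
  hw.hasTemperateGrowth.1.continuous.inv₀ hw.ne_zero

theorem integrable_inv_smul (hw : IsTemperateWeight w μ) (f : Lp ℂ 2 μ) :
    Integrable (fun x => (w x)⁻¹ • f x) μ := by
  rw [← memLp_one_iff_integrable]
  exact (Lp.memLp f).smul hw.memLp_inv

theorem sigmaFinite [BorelSpace E] (hw : IsTemperateWeight w μ) : SigmaFinite μ :=
  sigmaFinite_of_memLp_of_ne_zero hw.memLp_inv hw.continuous_inv.stronglyMeasurable two_ne_zero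
    ENNReal.ofNat_ne_top fun x => inv_ne_zero (hw.ne_zero x)

end NormedSpace

variable [InnerProductSpace ℝ E] [BorelSpace E] {w v : E → ℝ} {μ ν : Measure E}

theorem memLp_inv_smul_fourierChar (hw : IsTemperateWeight w μ) (ξ : E) :
    MemLp (fun x => (w x)⁻¹ • (𝐞 ⟪x, ξ⟫_ℝ : ℂ)) 2 μ := by
  refine hw.memLp_inv.of_le ?_ (.of_forall fun x => ?_)
  · have hchar : Continuous fun x => (𝐞 ⟪x, ξ⟫_ℝ : ℂ) :=
      continuous_subtype_val.comp (Real.continuous_fourierChar.comp (by fun_prop))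
    exact (hw.continuous_inv.smul hchar).aestronglyMeasurable
  · rw [norm_smul, Circle.norm_coe, mul_one]

/-- The value at `ξ` of the Fourier transform of `w⁻¹ f μ`, as a functional of `f ∈ L²(μ)`. Only
real linearity is recorded because Gaussian series are formed in real Hilbert spaces. -/
noncomputable def fourierFunctional (hw : IsTemperateWeight w μ) (ξ : E) : Lp ℂ 2 μ →L[ℝ] ℂ :=
  (innerSL ℂ (hw.memLp_inv_smul_fourierChar ξ).toLp).restrictScalars ℝ

theorem norm_fourierFunctional_le (hw : IsTemperateWeight w μ) (ξ : E) :
    ‖hw.fourierFunctional ξ‖ ≤ ‖hw.memLp_inv.toLp‖ := by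
  rw [fourierFunctional, ContinuousLinearMap.norm_restrictScalars, innerSL_apply_norm]
  refine Lp.norm_le_norm_of_ae_le ?_
  filter_upwards [(hw.memLp_inv_smul_fourierChar ξ).coeFn_toLp, hw.memLp_inv.coeFn_toLp]
    with x hx hx'
  rw [hx, hx', norm_smul, Circle.norm_coe, mul_one]

theorem fourierFunctional_apply (hw : IsTemperateWeight w μ) (ξ : E) (f : Lp ℂ 2 μ) :
    hw.fourierFunctional ξ f =
      VectorFourier.fourierIntegral 𝐞 μ (innerₗ E) (fun x => (w x)⁻¹ • f x) ξ := by
  refine (L2.inner_def _ _).trans (integral_congr_ae ?_)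
  filter_upwards [(hw.memLp_inv_smul_fourierChar ξ).coeFn_toLp] with x hx
  rw [hx, innerₗ_apply_apply, Circle.smul_def, AddChar.map_neg_eq_inv, Circle.coe_inv_eq_conj,
    RCLike.inner_apply', Complex.real_smul, map_mul, Complex.conj_ofReal, Complex.real_smul,
    smul_eq_mul]
  ring

theorem continuous_fourierFunctional_apply (hw : IsTemperateWeight w μ) (f : Lp ℂ 2 μ) :
    Continuous fun ξ => hw.fourierFunctional ξ f := by
  simp_rw [hw.fourierFunctional_apply]
  exact VectorFourier.fourierIntegral_continuous Real.continuous_fourierChar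
    (by exact continuous_inner) (hw.integrable_inv_smul f)

theorem memLp_inv_smul_fourierFunctional_apply (hw : IsTemperateWeight w μ)
    (hv : IsTemperateWeight v ν) (f : Lp ℂ 2 μ) :
    MemLp (fun ξ => ((v ξ)⁻¹ • hw.fourierFunctional ξ) f) 2 ν := by
  refine hv.memLp_inv.of_le_mul (c := ‖hw.memLp_inv.toLp‖ * ‖f‖)
    (hv.continuous_inv.smul (hw.continuous_fourierFunctional_apply f)).aestronglyMeasurable
    (.of_forall fun ξ => ?_)
  rw [smul_apply, norm_smul, mul_comm]
  gcongr
  exact (hw.fourierFunctional ξ).le_of_opNorm_le (hw.norm_fourierFunctional_le ξ) f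

end IsTemperateWeight

variable [InnerProductSpace ℝ E] [FiniteDimensional ℝ E] [BorelSpace E] {w v : E → ℝ}
  {μ : Measure E}

/-- The operator `ψ ↦ v · 𝓕 (w · ψ)` on the Schwartz space. -/
noncomputable def weightedFourierCLM (w v : E → ℝ) : 𝓢(E, ℂ) →L[ℝ] 𝓢(E, ℂ) :=
  SchwartzMap.smulLeftCLM ℂ v ∘L FourierTransform.fourierCLM ℝ 𝓢(E, ℂ) ∘L
    SchwartzMap.smulLeftCLM ℂ w

theorem integral_inner_fourierIntegral_fourier [SigmaFinite μ] {f : E → ℂ} (hf : Integrable f μ)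
    (ψ : 𝓢(E, ℂ)) :
    ∫ ξ, ⟪VectorFourier.fourierIntegral 𝐞 μ (innerₗ E) f ξ, 𝓕 ψ ξ⟫_ℂ = ∫ x, ⟪f x, ψ x⟫_ℂ ∂μ := by
  have hinv (x : E) :
      VectorFourier.fourierIntegral 𝐞 volume (-(innerₗ E).flip) (𝓕 ψ : 𝓢(E, ℂ)) x = ψ x := by
    have hψ : 𝓕⁻ (𝓕 ψ) x = ψ x := by rw [FourierTransform.fourierInv_fourier_eq]
    rw [← hψ, SchwartzMap.fourierInv_coe, flip_innerₗ]
    rfl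
  have h := VectorFourier.integral_sesq_fourierIntegral_eq_neg_flip (innerSL ℂ (E := ℂ))
    (L := innerₗ E) Real.continuous_fourierChar continuous_inner hf ((𝓕 ψ).integrable (μ := volume))
  simpa only [hinv, innerSL_apply_apply] using h

theorem inner_toLp_weightedFourierCLM [μ.HasTemperateGrowth] (hw : IsTemperateWeight w μ)
    (hv : IsTemperateWeight v volume) (f : Lp ℂ 2 μ) (ψ : 𝓢(E, ℂ)) :
    ⟪(hw.memLp_inv_smul_fourierFunctional_apply hv f).toLp,
      (weightedFourierCLM w v ψ).toLp 2 volume⟫_ℂ = ⟪f, ψ.toLp 2 μ⟫_ℂ := by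
  have := hw.sigmaFinite
  have hcancel {a : ℝ} (ha : a ≠ 0) (b c : ℂ) : ⟪a⁻¹ • b, a • c⟫_ℂ = ⟪b, c⟫_ℂ := by
    rw [inner_smul_left_eq_smul, inner_smul_right_eq_smul, inv_smul_smul₀ ha]
  calc _ = ∫ ξ, ⟪hw.fourierFunctional ξ f, 𝓕 (SchwartzMap.smulLeftCLM ℂ w ψ) ξ⟫_ℂ := by
        rw [L2.inner_def]
        refine integral_congr_ae ?_
        filter_upwards [(hw.memLp_inv_smul_fourierFunctional_apply hv f).coeFn_toLp,
          (weightedFourierCLM w v ψ).coeFn_toLp 2 volume] with ξ hξ hξ'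
        rw [hξ, hξ']
        exact (congrArg _ (SchwartzMap.smulLeftCLM_apply_apply hv.hasTemperateGrowth _ ξ)).trans
          (hcancel (hv.ne_zero ξ) _ _)
    _ = ∫ x, ⟪(w x)⁻¹ • f x, SchwartzMap.smulLeftCLM ℂ w ψ x⟫_ℂ ∂μ := by
        simp_rw [hw.fourierFunctional_apply]
        exact integral_inner_fourierIntegral_fourier (hw.integrable_inv_smul f) _
    _ = _ := by
        rw [L2.inner_def]
        refine integral_congr_ae ?_
        filter_upwards [ψ.coeFn_toLp 2 μ] with x hx
        rw [hx, SchwartzMap.smulLeftCLM_apply_apply hw.hasTemperateGrowth,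
          hcancel (hw.ne_zero x)]

end WeightedFourier

section WhiteNoise

open scoped SchwartzMap RealInnerProductSpace

variable {E : Type*} [NormedAddCommGroup E] [InnerProductSpace ℝ E]
  [MeasurableSpace E] [BorelSpace E] (μ : Measure E) [μ.HasTemperateGrowth]

lemma norm_toLp_postcompCLM_ofReal_sq (φ : 𝓢(E, ℝ)) :
    ‖(SchwartzMap.postcompCLM Complex.ofRealCLM φ).toLp 2 μ‖ ^ 2 = ∫ x, φ x ^ 2 ∂μ :=
  (norm_toLp_two_sq ((SchwartzMap.postcompCLM Complex.ofRealCLM φ).memLp 2 μ)).trans (by simp)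

theorem exists_whiteNoise [FiniteDimensional ℝ E] [MeasurableSpace (WeakDual ℝ 𝓢(E, ℝ))]
    [BorelSpace (WeakDual ℝ 𝓢(E, ℝ))] :
    ∃ P : ProbabilityMeasure (WeakDual ℝ 𝓢(E, ℝ)), ∀ φ : 𝓢(E, ℝ),
      ∫ ω : WeakDual ℝ 𝓢(E, ℝ), Complex.exp (Complex.I * ω φ)
          ∂(P : Measure (WeakDual ℝ 𝓢(E, ℝ))) =
        Complex.exp (-(1 / 2 : ℂ) * (∫ x, φ x ^ 2 ∂μ : ℝ)) := by
  obtain ⟨w, hw⟩ := exists_isTemperateWeight μ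
  obtain ⟨v, hv⟩ := exists_isTemperateWeight (volume : Measure E)
  obtain ⟨s, e, -⟩ := exists_hilbertBasis ℝ (Lp ℂ 2 μ)
  let J : 𝓢(E, ℝ) →L[ℝ] 𝓢(E, ℂ) := SchwartzMap.postcompCLM Complex.ofRealCLM
  have hL := hw.memLp_inv_smul_fourierFunctional_apply hv
  have hT : Summable fun i => ‖(hL (e i)).toLp‖ ^ 2 := by
    refine summable_norm_toLp_map_sq hL
      (hv.memLp_inv.norm.mul_const ‖hw.memLp_inv.toLp‖) (fun ξ => ?_) e.orthonormal
    rw [norm_smul]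
    gcongr
    exact hw.norm_fourierFunctional_le ξ
  have hTD (f : Lp ℂ 2 μ) (φ : 𝓢(E, ℝ)) :
      ⟪(hL f).toLp, (weightedFourierCLM w v (J φ)).toLp 2 volume⟫ = ⟪f, (J φ).toLp 2 μ⟫ := by
    rw [real_inner_L2_eq_re_inner, real_inner_L2_eq_re_inner, inner_toLp_weightedFourierCLM hw hv]
  obtain ⟨P, hP⟩ := exists_gaussian_weakDual (T := fun f => (hL f).toLp)
    (SchwartzMap.toLpCLM ℝ ℂ 2 volume ∘L weightedFourierCLM w v ∘L J)
    (fun φ => (J φ).toLp 2 μ) e hT hTD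
  exact ⟨P, fun φ => by rw [hP, norm_toLp_postcompCLM_ofReal_sq]⟩

end WhiteNoise

theorem bochner_minlos_general {E : Type*} [NormedAddCommGroup E] [InnerProductSpace ℝ E]
    [FiniteDimensional ℝ E] [MeasurableSpace E] [BorelSpace E] (μ : Measure E)
    [μ.HasTemperateGrowth] :
    letI : MeasurableSpace (WeakDual ℝ (SchwartzMap E ℝ)) := borel (WeakDual ℝ (SchwartzMap E ℝ))
    ∃! P : ProbabilityMeasure (WeakDual ℝ (SchwartzMap E ℝ)), ∀ φ : SchwartzMap E ℝ,
      ∫ ω : WeakDual ℝ (SchwartzMap E ℝ), Complex.exp (Complex.I * (ω φ : ℂ))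
          ∂(P : Measure (WeakDual ℝ (SchwartzMap E ℝ))) =
        Complex.exp (-(1 / 2 : ℂ) * ((∫ x, (φ x) ^ 2 ∂μ : ℝ) : ℂ)) := by
  borelize (WeakDual ℝ (SchwartzMap E ℝ))
  have := secondCountableTopology_schwartzMap (E := E) (F := ℝ)
  obtain ⟨P, hP⟩ := exists_whiteNoise μ
  exact ⟨P, hP, fun Q hQ => ProbabilityMeasure.toMeasure_injective <|
    ext_of_charFun_weakDual fun φ => (hQ φ).trans (hP φ).symm⟩

/-- (Bochner–Minlos) There is a unique probability measure `P` on the Borel σ-algebra of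
the weak-* dual `S'(ℝⁿ)` of the Schwartz space such that
`∫ e^{i⟨ω,φ⟩} dP(ω) = e^{−½‖φ‖²_{L²}}` for every Schwartz function `φ`. -/
theorem bochner_minlos (n : ℕ) (hn : 1 ≤ n) :
    letI : MeasurableSpace (WeakDual ℝ (SchwartzMap (EuclideanSpace ℝ (Fin n)) ℝ)) :=
      borel (WeakDual ℝ (SchwartzMap (EuclideanSpace ℝ (Fin n)) ℝ))
    ∃! P : ProbabilityMeasure (WeakDual ℝ (SchwartzMap (EuclideanSpace ℝ (Fin n)) ℝ)),
      ∀ φ : SchwartzMap (EuclideanSpace ℝ (Fin n)) ℝ,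
        ∫ ω : WeakDual ℝ (SchwartzMap (EuclideanSpace ℝ (Fin n)) ℝ),
            Complex.exp (Complex.I * (ω φ : ℂ))
            ∂(P : Measure (WeakDual ℝ (SchwartzMap (EuclideanSpace ℝ (Fin n)) ℝ))) =
          Complex.exp (-(1 / 2 : ℂ) *
            ((∫ x : EuclideanSpace ℝ (Fin n), (φ x) ^ 2 : ℝ) : ℂ)) :=
  bochner_minlos_general volume
end
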